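/- arXiv:1210.3397 — 7 statements merged into one kernel-verified Lean document; each statement's English description precedes it below -/
import Mathlib

section
/- Let ψ : [0,∞) → [0,∞) be a concave function with lim_{t→0+} ψ(t) = 0 and lim_{t→∞} ψ(t) = ∞, and let f be a nonnegative nonincreasing measurable function on (0,∞) with ‖f‖ := sup_{t>0} (1/ψ(t)) ∫_0^t f(s) ds < ∞. Then the function t ↦ a(e^t, f), where a(u,f) = (1/ψ(u)) ∫_0^u f(s) ds, is Lipschitz on (0,∞) with Lipschitz constant at most 2‖f‖; in particular it is uniformly continuous. -/
open MeasureTheory Filter Set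

/-- `avA ψ f t = (1/ψ(t)) ∫_0^t f(s) ds`. -/
noncomputable def avA (ψ f : ℝ → ℝ) (t : ℝ) : ℝ := (∫ s in (0:ℝ)..t, f s) / ψ t

/-- A function is bounded on `(0, ∞)`. -/
def BddPos (x : ℝ → ℝ) : Prop := ∃ C : ℝ, ∀ t > (0:ℝ), |x t| ≤ C

/-- A generalized limit (at infinity) on the bounded measurable functions on `(0, ∞)`:
a linear functional sandwiched between `liminf` and `limsup` at infinity. -/
def IsGenLim (ω : (ℝ → ℝ) → ℝ) : Prop :=
  (∀ x y : ℝ → ℝ, Measurable x → BddPos x → Measurable y → BddPos y →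
    ω (x + y) = ω x + ω y) ∧
  (∀ (c : ℝ) (x : ℝ → ℝ), Measurable x → BddPos x → ω (c • x) = c * ω x) ∧
  (∀ x : ℝ → ℝ, Measurable x → BddPos x →
    Filter.liminf x Filter.atTop ≤ ω x ∧ ω x ≤ Filter.limsup x Filter.atTop)

/-- Dilation invariance: `ω (σ_s x) = ω x` where `(σ_s x)(t) = x(t/s)`. -/
def DilInv (ω : (ℝ → ℝ) → ℝ) : Prop :=
  ∀ s > (0:ℝ), ∀ x : ℝ → ℝ, Measurable x → BddPos x →
    ω (fun t => x (t / s)) = ω x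

/-- The class `Ω`: nonnegative concave functions on `[0, ∞)` with `ψ(0+) = 0`
and `ψ(∞) = ∞`. -/
def InOmegaClass (ψ : ℝ → ℝ) : Prop :=
  ConcaveOn ℝ (Set.Ici 0) ψ ∧ (∀ t, 0 ≤ t → 0 ≤ ψ t) ∧
  Filter.Tendsto ψ (nhdsWithin 0 (Set.Ioi 0)) (nhds 0) ∧
  Filter.Tendsto ψ Filter.atTop Filter.atTop

theorem aux_exp_le (ψ : ℝ → ℝ) (hψ : InOmegaClass ψ)
    (f : ℝ → ℝ)
    (hfpos : ∀ t > (0:ℝ), 0 ≤ f t) (hfmono : AntitoneOn f (Set.Ioi 0))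
    (hfint : ∀ t > (0:ℝ), IntegrableOn f (Set.Ioc 0 t))
    (C : ℝ) (hC : ∀ t > (0:ℝ), avA ψ f t ≤ C) (u v : ℝ) (hu : 0 < u) (huv : u ≤ v) :
    0 ≤ C ∧ |avA ψ f u - avA ψ f v| ≤ C * (1 - u / v) := by
  obtain ⟨hconc, hnn, -, htop⟩ := hψ
  have hv : 0 < v := hu.trans_le huv
  have hstar : ∀ x y : ℝ, 0 < x → x ≤ y → x * ψ y ≤ y * ψ x := by
    intro x y hx hxy
    have hy : 0 < y := hx.trans_le hxy
    have h := hconc.2 (show (0:ℝ) ∈ Set.Ici 0 by simp) (show y ∈ Set.Ici (0:ℝ) from hy.le)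
      (show 0 ≤ 1 - x / y by rw [sub_nonneg, div_le_one hy]; exact hxy)
      (show 0 ≤ x / y by positivity) (by ring)
    simp only [smul_eq_mul, mul_zero, zero_add] at h
    rw [div_mul_cancel₀ _ hy.ne'] at h
    have h0 : 0 ≤ (1 - x / y) * ψ 0 :=
      mul_nonneg (by rw [sub_nonneg, div_le_one hy]; exact hxy) (hnn 0 le_rfl)
    have h2 : x / y * ψ y ≤ ψ x := by linarith
    rw [div_mul_eq_mul_div, div_le_iff₀ hy] at h2
    linarith
  have hpos : ∀ x : ℝ, 0 < x → 0 < ψ x := by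
    intro x hx
    obtain ⟨w, hw1, hw2⟩ := ((htop.eventually_ge_atTop 1).and (eventually_ge_atTop x)).exists
    have := hstar x w hx hw2
    have hw : 0 < w := hx.trans_le hw2
    have h3 : 0 < w * ψ x := lt_of_lt_of_le (by positivity) this
    exact pos_of_mul_pos_right h3 hw.le
  have hmono : ψ u ≤ ψ v := by
    obtain ⟨w, hw1, hw2⟩ := ((htop.eventually_ge_atTop (ψ u)).and (eventually_ge_atTop v)).exists
    have := hconc.min_le_of_mem_Icc (show u ∈ Set.Ici (0:ℝ) from hu.le)
      (show w ∈ Set.Ici (0:ℝ) from (hv.trans_le hw2).le) (show v ∈ Set.Icc u w from ⟨huv, hw2⟩)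
    rwa [min_eq_left hw1] at this
  have hI : ∀ x : ℝ, 0 < x → IntervalIntegrable f volume 0 x := fun x hx =>
    (intervalIntegrable_iff_integrableOn_Ioc_of_le hx.le).2 (hfint x hx)
  have hIuv : IntervalIntegrable f volume u v := (hI u hu).symm.trans (hI v hv)
  have hadd := intervalIntegral.integral_add_adjacent_intervals (hI u hu) hIuv
  have h1 : 0 ≤ ∫ s in u..v, f s :=
    intervalIntegral.integral_nonneg huv fun s hs => hfpos s (hu.trans_le hs.1)
  have h2 : ∫ s in u..v, f s ≤ (v - u) * f u := by
    have := intervalIntegral.integral_mono_on huv hIuv (intervalIntegrable_const (c := f u))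
      (fun s hs => hfmono (show u ∈ Set.Ioi (0:ℝ) from hu)
        (show s ∈ Set.Ioi (0:ℝ) from hu.trans_le hs.1) hs.1)
    simpa using this
  have h3 : u * f u ≤ ∫ s in (0:ℝ)..u, f s := by
    have := intervalIntegral.integral_mono_on_of_le_Ioo hu.le
      (intervalIntegrable_const (c := f u)) (hI u hu)
      (fun s hs => hfmono (show s ∈ Set.Ioi (0:ℝ) from hs.1)
        (show u ∈ Set.Ioi (0:ℝ) from hu) hs.2.le)
    simpa using this
  have hCu := hC u hu
  have hCv := hC v hv
  unfold avA at *
  set F := ∫ s in (0:ℝ)..u, f s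
  set G := ∫ s in (0:ℝ)..v, f s
  have hF : 0 ≤ F := le_trans (mul_nonneg hu.le (hfpos u hu)) h3
  have hFG : F ≤ G := by linarith
  have hGF : u * G ≤ v * F := by
    have e1 := mul_le_mul_of_nonneg_left h2 hu.le
    have e2 := mul_le_mul_of_nonneg_left h3 (sub_nonneg.2 huv)
    rw [← hadd]
    nlinarith
  have hpu := hpos u hu
  have hpv := hpos v hv
  have hC0 : 0 ≤ C := le_trans (by positivity) hCu
  have hr : 0 ≤ 1 - u / v := by rw [sub_nonneg, div_le_one hv]; exact huv
  refine ⟨hC0, abs_le.2 ⟨?_, ?_⟩⟩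
  · have e1 : u / v * (G / ψ v) ≤ F / ψ u := by
      calc u / v * (G / ψ v) = (u * G / v) / ψ v := by field_simp
        _ ≤ F / ψ v := by
            gcongr
            rw [div_le_iff₀ hv]; linarith
        _ ≤ F / ψ u := by gcongr
    have e2 := mul_le_mul_of_nonneg_right hCv hr
    linarith
  · have e1 : u / v * (F / ψ u) ≤ G / ψ v := by
      calc u / v * (F / ψ u) = F * (u / (v * ψ u)) := by field_simp
        _ ≤ F * (1 / ψ v) := by
            refine mul_le_mul_of_nonneg_left ?_ hF
            rw [div_le_div_iff₀ (by positivity) hpv]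
            linarith [hstar u v hu huv]
        _ = F / ψ v := by ring
        _ ≤ G / ψ v := by gcongr
    have e2 := mul_le_mul_of_nonneg_right hCu hr
    linarith

/-- For `ψ ∈ Ω` and nonnegative nonincreasing `f` with `a(t,f) = (1/ψ(t)) ∫_0^t f ≤ C`
for all `t > 0`, the map `t ↦ a(eᵗ, f)` is Lipschitz on `(0,∞)` with constant at
most `2C`; in particular it is uniformly continuous on `(0,∞)`. -/
theorem avA_exp_lipschitz (ψ : ℝ → ℝ) (hψ : InOmegaClass ψ)
    (f : ℝ → ℝ) (hfmeas : Measurable f)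
    (hfpos : ∀ t > (0:ℝ), 0 ≤ f t) (hfmono : AntitoneOn f (Set.Ioi 0))
    (hfint : ∀ t > (0:ℝ), IntegrableOn f (Set.Ioc 0 t))
    (C : ℝ) (hC : ∀ t > (0:ℝ), avA ψ f t ≤ C) :
    (∀ t₁ > (0:ℝ), ∀ t₂ > (0:ℝ),
        |avA ψ f (Real.exp t₁) - avA ψ f (Real.exp t₂)| ≤ 2 * C * |t₁ - t₂|) ∧
    UniformContinuousOn (fun t => avA ψ f (Real.exp t)) (Set.Ioi 0) := by
  have hC0 : 0 ≤ C := (aux_exp_le ψ hψ f hfpos hfmono hfint C hC 1 1 one_pos le_rfl).1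
  have key : ∀ a b : ℝ, a ≤ b →
      |avA ψ f (Real.exp a) - avA ψ f (Real.exp b)| ≤ 2 * C * |a - b| := by
    intro a b hab
    have h := (aux_exp_le ψ hψ f hfpos hfmono hfint C hC (Real.exp a) (Real.exp b)
      (Real.exp_pos a) (Real.exp_le_exp.2 hab)).2
    rw [← Real.exp_sub] at h
    have h2 := Real.add_one_le_exp (a - b)
    rw [abs_of_nonpos (sub_nonpos.2 hab)]
    have h3 : C * (1 - Real.exp (a - b)) ≤ C * (b - a) :=
      mul_le_mul_of_nonneg_left (by linarith) hC0
    have h4 : 0 ≤ C * (b - a) := mul_nonneg hC0 (sub_nonneg.2 hab)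
    linarith
  have main : ∀ t₁ > (0:ℝ), ∀ t₂ > (0:ℝ),
      |avA ψ f (Real.exp t₁) - avA ψ f (Real.exp t₂)| ≤ 2 * C * |t₁ - t₂| := by
    intro a _ b _
    rcases le_total a b with hab | hab
    · exact key a b hab
    · rw [abs_sub_comm, abs_sub_comm a b]
      exact key b a hab
  refine ⟨main, ?_⟩
  have hL : LipschitzOnWith (Real.toNNReal (2 * C)) (fun t => avA ψ f (Real.exp t))
      (Set.Ioi 0) := by
    refine LipschitzOnWith.of_dist_le_mul fun x hx y hy => ?_
    rw [Real.dist_eq, Real.dist_eq, Real.coe_toNNReal _ (by positivity)]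
    exact main x hx y hy
  exact hL.uniformContinuousOn
end

section
/- Define f0 : (0,∞) → ℝ by f0 = sup_{k≥0} 2^{k−2^k} χ_{[0,2^{2^k})}, i.e. f0(t) = sup { 2^{k−2^k} : k ≥ 0, t < 2^{2^k} } (and f0(t) = 0 if no such k exists). Then f0 is nonnegative, nonincreasing, and sup_{t>0} (1/log(1+t)) ∫_0^t f0(s) ds < ∞; that is, f0 belongs to the Marcinkiewicz function space M_{1,∞}. -/
open MeasureTheory Filter Set

/-- `f0 = sup_{k ≥ 0} 2^(k - 2^k) χ_[0, 2^(2^k))`, i.e.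
`f0(t) = sup {2^(k - 2^k) : k ≥ 0, t < 2^(2^k)}` (and `0` if no such `k` exists). -/
noncomputable def f0 : ℝ → ℝ := fun t =>
  ⨆ k : ℕ, if t < (2:ℝ) ^ (2 ^ k) then (2:ℝ) ^ ((k : ℤ) - 2 ^ k) else 0

theorem f0_a_anti : Antitone (fun k : ℕ => (2:ℝ) ^ ((k : ℤ) - 2 ^ k)) := by
  apply antitone_nat_of_succ_le
  intro k
  apply zpow_le_zpow_right₀ (by norm_num)
  have : (1:ℤ) ≤ 2 ^ k := one_le_pow₀ (by norm_num)
  push_cast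
  rw [pow_succ]
  linarith

theorem f0_term_le (t : ℝ) (k : ℕ) :
    (if t < (2:ℝ) ^ (2 ^ k) then (2:ℝ) ^ ((k : ℤ) - 2 ^ k) else 0) ≤ 1 / 2 := by
  split_ifs
  · have := f0_a_anti (Nat.zero_le k)
    norm_num at this ⊢
    exact this
  · norm_num

theorem f0_bdd (t : ℝ) : BddAbove (Set.range fun k : ℕ =>
    if t < (2:ℝ) ^ (2 ^ k) then (2:ℝ) ^ ((k : ℤ) - 2 ^ k) else 0) :=
  ⟨1 / 2, by rintro _ ⟨k, rfl⟩; exact f0_term_le t k⟩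

theorem f0_nonneg (t : ℝ) : 0 ≤ f0 t := by
  apply Real.iSup_nonneg
  intro k
  split_ifs
  · positivity
  · exact le_rfl

theorem f0_le_half (t : ℝ) : f0 t ≤ 1 / 2 := ciSup_le (f0_term_le t)

theorem f0_anti : Antitone f0 := by
  intro s t hst
  apply ciSup_mono (f0_bdd s)
  intro k
  split_ifs with h1 h2 h2
  · exact le_rfl
  · exact absurd (hst.trans_lt h1) h2
  · positivity
  · exact le_rfl

theorem f0_le_a (n : ℕ) (t : ℝ) (ht : (2:ℝ) ^ (2 ^ n) ≤ t) :
    f0 t ≤ (2:ℝ) ^ (((n + 1 : ℕ) : ℤ) - 2 ^ (n + 1)) := by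
  apply ciSup_le
  intro k
  split_ifs with h
  · apply f0_a_anti
    by_contra hk
    have hk : k ≤ n := by omega
    have : (2:ℝ) ^ (2 ^ k) ≤ 2 ^ (2 ^ n) :=
      pow_le_pow_right₀ (by norm_num) (Nat.pow_le_pow_right (by norm_num) hk)
    linarith
  · positivity

theorem f0_int (a b : ℝ) : IntervalIntegrable f0 volume a b :=
  f0_anti.intervalIntegrable

theorem f0_integral_le (a b c : ℝ) (hab : a ≤ b) (h : ∀ s, a ≤ s → f0 s ≤ c) :
    ∫ s in a..b, f0 s ≤ (b - a) * c := by
  have := intervalIntegral.integral_mono_on hab (f0_int a b)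
    (intervalIntegrable_const (c := c)) (fun s hs => h s hs.1)
  simpa using this

theorem f0_integral_pow (n : ℕ) : ∫ s in (0:ℝ)..2 ^ (2 ^ n), f0 s ≤ 2 ^ (n + 1) := by
  induction n with
  | zero =>
    have := f0_integral_le 0 (2 ^ (2 ^ 0)) (1 / 2) (by norm_num) (fun s _ => f0_le_half s)
    norm_num at this ⊢
    linarith
  | succ n ih =>
    have hm : (2:ℝ) ^ (2 ^ n) ≤ 2 ^ (2 ^ (n + 1)) :=
      pow_le_pow_right₀ (by norm_num) (Nat.pow_le_pow_right (by norm_num) (Nat.le_succ n))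
    have h2 := f0_integral_le _ _ _ hm (f0_le_a n)
    rw [← intervalIntegral.integral_add_adjacent_intervals (f0_int 0 (2 ^ (2 ^ n))) (f0_int _ _)]
    have hp : (0:ℝ) < (2:ℝ) ^ (((n + 1 : ℕ) : ℤ) - 2 ^ (n + 1)) := by positivity
    have h3 : (2:ℝ) ^ (2 ^ (n + 1)) * (2:ℝ) ^ (((n + 1 : ℕ) : ℤ) - 2 ^ (n + 1)) = 2 ^ (n + 1) := by
      rw [← zpow_natCast, ← zpow_add₀ (by norm_num), ← zpow_natCast]
      congr 1
      push_cast
      ring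
    have h4 : (0:ℝ) < (2:ℝ) ^ (2 ^ n) := by positivity
    have h5 := mul_pos h4 hp
    rw [sub_mul, h3] at h2
    rw [pow_succ 2 (n + 1)]
    linarith

/-- `f0` is nonnegative, nonincreasing on `(0,∞)`, and belongs to the Marcinkiewicz
function space `M_{1,∞}`: `sup_{t>0} (1/log(1+t)) ∫_0^t f0(s) ds < ∞`. -/
theorem f0_mem_M1infty :
    (∀ t : ℝ, 0 ≤ f0 t) ∧ AntitoneOn f0 (Set.Ioi 0) ∧
    ∃ C : ℝ, ∀ t > (0:ℝ), (∫ s in (0:ℝ)..t, f0 s) / Real.log (1 + t) ≤ C := by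
  refine ⟨f0_nonneg, f0_anti.antitoneOn _, 8, ?_⟩
  intro t ht
  have hlog : 0 < Real.log (1 + t) := Real.log_pos (by linarith)
  rw [div_le_iff₀ hlog]
  by_cases h2 : t < 2
  · have h := f0_integral_le 0 t (1 / 2) ht.le (fun s _ => f0_le_half s)
    have h3 := Real.one_sub_inv_le_log_of_pos (show 0 < 1 + t by linarith)
    have h4 : t / 3 ≤ 1 - (1 + t)⁻¹ := by
      have : 1 - (1 + t)⁻¹ = t / (1 + t) := by field_simp; ring
      rw [this]
      exact div_le_div_of_nonneg_left ht.le (by linarith) (by linarith)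
    linarith
  · push Not at h2
    have hex : ∃ n : ℕ, t < (2:ℝ) ^ (2 ^ n) := by
      obtain ⟨n, hn⟩ := pow_unbounded_of_one_lt t (show (1:ℝ) < 2 by norm_num)
      exact ⟨n, hn.trans_le (pow_le_pow_right₀ (by norm_num) Nat.lt_two_pow_self.le)⟩
    classical
    obtain ⟨n, hn, hmin⟩ : ∃ n : ℕ, t < (2:ℝ) ^ (2 ^ n) ∧ ∀ m < n, ¬ t < (2:ℝ) ^ (2 ^ m) :=
      ⟨Nat.find hex, Nat.find_spec hex, fun m hm => Nat.find_min hex hm⟩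
    cases n with
    | zero => norm_num at hn; linarith
    | succ n =>
      have hl := hmin n (Nat.lt_succ_self n)
      push Not at hl
      have h1 := f0_integral_pow (n + 1)
      rw [← intervalIntegral.integral_add_adjacent_intervals (f0_int 0 t) (f0_int _ _)] at h1
      have h5 := intervalIntegral.integral_nonneg (μ := volume) hn.le (fun s _ => f0_nonneg s)
      have h6 : Real.log ((2:ℝ) ^ (2 ^ n)) ≤ Real.log (1 + t) :=
        Real.log_le_log (by positivity) (by linarith)
      rw [Real.log_pow] at h6
      push_cast at h6
      have h7 : (0:ℝ) < 2 ^ n := by positivity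
      have h8 := Real.log_two_gt_d9
      have h9 : (2:ℝ) ^ n * (1 / 2) ≤ 2 ^ n * Real.log 2 :=
        mul_le_mul_of_nonneg_left (by linarith) h7.le
      have h10 : (2:ℝ) ^ (n + 1 + 1) = 4 * 2 ^ n := by ring
      linarith
end

section
/- Define x : (0,∞) → ℝ by x(t) = 2^n/log t for t ∈ [2^{2^n}, 2^{2^{n+1}}) with n ≥ 0 an integer, and x(t) = 0 for t ∈ (0,2). Then limsup_{t→∞} (Mx)(t) = 2/(e·log 2), where (Mx)(t) = (1/log t) ∫_1^t x(s) ds/s for t > 1. -/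
open MeasureTheory Filter Set

/-- The logarithmic Cesàro mean `(Mg)(t) = (1/log t) ∫_1^t g(s) ds/s`. -/
noncomputable def Mop (g : ℝ → ℝ) (t : ℝ) : ℝ := (∫ s in (1:ℝ)..t, g s / s) / Real.log t

/-- `x(t) = 2^n / log t` for `t ∈ [2^(2^n), 2^(2^(n+1)))` (so `n = ⌊log₂ log₂ t⌋`
for `t ≥ 2`), and `x(t) = 0` for `t < 2`. -/
noncomputable def x0 : ℝ → ℝ := fun t =>
  if 2 ≤ t then (2:ℝ) ^ (Nat.floor (Real.logb 2 (Real.logb 2 t))) / Real.log t else 0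

noncomputable def TT (n : ℕ) : ℝ := Real.exp (2 ^ n * Real.log 2)

lemma TT_pos (n : ℕ) : 0 < TT n := Real.exp_pos _

lemma log_TT (n : ℕ) : Real.log (TT n) = 2 ^ n * Real.log 2 := Real.log_exp _

lemma TT_zero : TT 0 = 2 := by simp [TT, Real.exp_log]

lemma log2_pos : 0 < Real.log 2 := Real.log_pos (by norm_num)

lemma TT_mono {m n : ℕ} (h : m ≤ n) : TT m ≤ TT n := by
  unfold TT
  have := log2_pos
  gcongr
  norm_num

lemma two_le_TT (n : ℕ) : 2 ≤ TT n := by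
  rw [← TT_zero]; exact TT_mono (Nat.zero_le n)

lemma x0_eq (n : ℕ) {s : ℝ} (h1 : TT n ≤ s) (h2 : s < TT (n+1)) :
    x0 s = 2 ^ n / Real.log s := by
  have hL := log2_pos
  have hs : 2 ≤ s := (two_le_TT n).trans h1
  have a1 : 2 ^ n * Real.log 2 ≤ Real.log s := by
    rw [← log_TT]; exact Real.log_le_log (TT_pos n) h1
  have a2 : Real.log s < 2 ^ (n+1) * Real.log 2 := by
    rw [← log_TT]; exact Real.log_lt_log (by linarith) h2
  have b1 : (2:ℝ) ^ n ≤ Real.logb 2 s := by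
    rw [Real.logb, le_div_iff₀ hL]; exact a1
  have b2 : Real.logb 2 s < (2:ℝ) ^ (n+1) := by
    rw [Real.logb, div_lt_iff₀ hL]; exact a2
  have bp : 0 < Real.logb 2 s := lt_of_lt_of_le (by positivity) b1
  have hf : Nat.floor (Real.logb 2 (Real.logb 2 s)) = n := by
    have c1 : (n:ℝ) ≤ Real.logb 2 (Real.logb 2 s) := by
      rw [Real.le_logb_iff_rpow_le (by norm_num) bp, Real.rpow_natCast]; exact b1
    have c2 : Real.logb 2 (Real.logb 2 s) < n + 1 := by
      rw [Real.logb_lt_iff_lt_rpow (by norm_num) bp]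
      have : ((n:ℝ)+1) = ((n+1 : ℕ):ℝ) := by push_cast; rfl
      rw [this, Real.rpow_natCast]; exact b2
    rw [Nat.floor_eq_iff (le_trans (Nat.cast_nonneg n) c1)]
    exact ⟨c1, c2⟩
  simp only [x0, if_pos hs, hf]

lemma piece (n : ℕ) {t : ℝ} (h1 : TT n ≤ t) (h2 : t ≤ TT (n+1)) :
    IntervalIntegrable (fun s => x0 s / s) volume (TT n) t ∧
    ∫ s in (TT n)..t, x0 s / s =
      2 ^ n * (Real.log (Real.log t) - Real.log (2 ^ n * Real.log 2)) := by
  have hpos : ∀ s ∈ uIcc (TT n) t, 2 ≤ s := by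
    intro s hs
    rw [uIcc_of_le h1] at hs
    exact (two_le_TT n).trans hs.1
  have heq : EqOn (fun s => 2 ^ n / Real.log s / s) (fun s => x0 s / s) (uIoo (TT n) t) := by
    intro s hs
    rw [uIoo_of_le h1] at hs
    simp only
    rw [x0_eq n hs.1.le (hs.2.trans_le h2)]
  have hlog : ∀ s ∈ uIcc (TT n) t, Real.log s ≠ 0 := fun s hs =>
    (Real.log_pos (by linarith [hpos s hs])).ne'
  have hne : ∀ s ∈ uIcc (TT n) t, s ≠ 0 := fun s hs => by linarith [hpos s hs]
  have hint : IntervalIntegrable (fun s => 2 ^ n / Real.log s / s) volume (TT n) t := by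
    apply ContinuousOn.intervalIntegrable
    apply ContinuousOn.div _ continuousOn_id hne
    apply ContinuousOn.div continuousOn_const _ hlog
    exact Real.continuousOn_log.mono (fun s hs => by simpa using hne s hs)
  refine ⟨hint.congr_uIoo heq, ?_⟩
  rw [← intervalIntegral.integral_congr_uIoo heq]
  rw [intervalIntegral.integral_eq_sub_of_hasDerivAt
    (f := fun s => 2 ^ n * Real.log (Real.log s)) _ hint]
  · rw [log_TT]; ring
  · intro s hs
    have := (((Real.hasDerivAt_log (hne s hs)).log (hlog s hs)).const_mul ((2:ℝ)^n))
    refine HasDerivAt.congr_deriv this ?_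
    simp only [div_eq_mul_inv]; ring

lemma first : IntervalIntegrable (fun s => x0 s / s) volume 1 (TT 0) ∧
    ∫ s in (1:ℝ)..(TT 0), x0 s / s = 0 := by
  have heq : EqOn (fun _ => (0:ℝ)) (fun s => x0 s / s) (uIoo 1 (TT 0)) := by
    intro s hs
    rw [TT_zero, uIoo_of_le (by norm_num)] at hs
    simp [x0, not_le.2 hs.2]
  refine ⟨IntervalIntegrable.congr_uIoo (f := fun _ => (0:ℝ)) (by simp) heq, ?_⟩
  rw [← intervalIntegral.integral_congr_uIoo heq]
  simp

lemma full (n : ℕ) : IntervalIntegrable (fun s => x0 s / s) volume 1 (TT n) ∧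
    ∫ s in (1:ℝ)..(TT n), x0 s / s = (2 ^ n - 1) * Real.log 2 := by
  induction n with
  | zero => simpa using first
  | succ n ih =>
    obtain ⟨p1, p2⟩ := piece n (TT_mono (Nat.le_succ n)) le_rfl
    refine ⟨ih.1.trans p1, ?_⟩
    rw [← intervalIntegral.integral_add_adjacent_intervals ih.1 p1, ih.2, p2, log_TT]
    have hL := log2_pos
    have : Real.log (2 ^ (n+1) * Real.log 2) = Real.log 2 + Real.log (2 ^ n * Real.log 2) := by
      rw [← Real.log_mul (by norm_num) (by positivity)]; ring_nf
    rw [this]; ring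

/-- The exact formula with `w = 2 log t / (2^n log 2)`. -/
lemma Mop_eq (n : ℕ) {w : ℝ} (h1 : 2 ≤ w) (h2 : w ≤ 4) :
    Mop x0 (Real.exp (2 ^ n * Real.log 2 * (w / 2))) =
      2 * Real.log w / (w * Real.log 2) - 2 / w / 2 ^ n := by
  have hL := log2_pos
  have hw : 0 < w := by linarith
  set t := Real.exp (2 ^ n * Real.log 2 * (w / 2)) with ht
  have hlt : Real.log t = 2 ^ n * Real.log 2 * (w / 2) := Real.log_exp _
  have hA : (0:ℝ) < 2 ^ n * Real.log 2 := by positivity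
  have t1 : TT n ≤ t := by
    rw [ht, TT]; apply Real.exp_le_exp.2; nlinarith
  have t2 : t ≤ TT (n+1) := by
    rw [ht, TT]; apply Real.exp_le_exp.2; rw [pow_succ]; nlinarith
  obtain ⟨p1, p2⟩ := piece n t1 t2
  obtain ⟨f1, f2⟩ := full n
  rw [Mop, ← intervalIntegral.integral_add_adjacent_intervals f1 p1, f2, p2, hlt,
    Real.log_mul hA.ne' (by positivity), Real.log_div hw.ne' (by norm_num)]
  field_simp
  ring

lemma exists_rep {t : ℝ} (ht : 2 ≤ t) : ∃ (n : ℕ) (w : ℝ), 2 ≤ w ∧ w ≤ 4 ∧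
    t = Real.exp (2 ^ n * Real.log 2 * (w / 2)) := by
  have hL := log2_pos
  have h1 : 1 ≤ Real.log t / Real.log 2 := by
    rw [le_div_iff₀ hL, one_mul]; exact Real.log_le_log (by norm_num) ht
  obtain ⟨n, a, b⟩ := exists_nat_pow_near h1 (by norm_num : (1:ℝ) < 2)
  rw [le_div_iff₀ hL] at a
  rw [div_lt_iff₀ hL, pow_succ] at b
  have hA : (0:ℝ) < 2 ^ n * Real.log 2 := by positivity
  refine ⟨n, 2 * (Real.log t / (2 ^ n * Real.log 2)), ?_, ?_, ?_⟩
  · have : 1 ≤ Real.log t / (2 ^ n * Real.log 2) := by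
      rw [le_div_iff₀ hA]; linarith
    linarith
  · have : Real.log t / (2 ^ n * Real.log 2) ≤ 2 := by
      rw [div_le_iff₀ hA]; nlinarith
    linarith
  · have : 2 ^ n * Real.log 2 * (2 * (Real.log t / (2 ^ n * Real.log 2)) / 2) = Real.log t := by
      field_simp
    rw [this, Real.exp_log (by linarith)]

lemma upper {t : ℝ} (ht : 2 ≤ t) : Mop x0 t ≤ 2 / (Real.exp 1 * Real.log 2) := by
  have hL := log2_pos
  obtain ⟨n, w, h1, h2, rfl⟩ := exists_rep ht
  rw [Mop_eq n h1 h2]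
  have hw : 0 < w := by linarith
  have he := Real.exp_pos 1
  have k : Real.log w ≤ w / Real.exp 1 := by
    have := Real.log_le_sub_one_of_pos (show 0 < w / Real.exp 1 by positivity)
    rw [Real.log_div hw.ne' he.ne', Real.log_exp] at this
    linarith
  have k2 : 2 * Real.log w / (w * Real.log 2) ≤ 2 / (Real.exp 1 * Real.log 2) := by
    calc 2 * Real.log w / (w * Real.log 2) ≤ 2 * (w / Real.exp 1) / (w * Real.log 2) := by
          gcongr
      _ = _ := by field_simp
  have : 0 ≤ 2 / w / 2 ^ n := by positivity
  linarith

lemma freq {a : ℝ} (ha : a < 2 / (Real.exp 1 * Real.log 2)) :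
    ∃ᶠ t in atTop, a ≤ Mop x0 t := by
  have hL := log2_pos
  have e1 : 2 ≤ Real.exp 1 := by linarith [Real.exp_one_gt_d9]
  have e2 : Real.exp 1 ≤ 4 := by linarith [Real.exp_one_lt_d9]
  have hp : Tendsto (fun n : ℕ => (2:ℝ) ^ n) atTop atTop :=
    tendsto_pow_atTop_atTop_of_one_lt (by norm_num)
  have hT : Tendsto (fun n : ℕ => Real.exp (2 ^ n * Real.log 2 * (Real.exp 1 / 2))) atTop atTop :=
    Real.tendsto_exp_atTop.comp
      ((hp.atTop_mul_const hL).atTop_mul_const (by positivity))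
  have hlim : Tendsto (fun n : ℕ => Mop x0 (Real.exp (2 ^ n * Real.log 2 * (Real.exp 1 / 2))))
      atTop (nhds (2 / (Real.exp 1 * Real.log 2))) := by
    simp_rw [fun n => Mop_eq n e1 e2, Real.log_exp]
    simpa using (tendsto_const_nhds (x := 2 / (Real.exp 1 * Real.log 2))).sub
      (hp.const_div_atTop (2 / Real.exp 1))
  exact hT.frequently ((hlim.eventually (eventually_ge_nhds ha)).frequently)

/-- `limsup_{t→∞} (Mx)(t) = 2/(e log 2)`. -/
theorem limsup_Mop_x0 :
    Filter.limsup (Mop x0) Filter.atTop = 2 / (Real.exp 1 * Real.log 2) := by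
  have hub : ∀ᶠ t in atTop, Mop x0 t ≤ 2 / (Real.exp 1 * Real.log 2) := by
    filter_upwards [eventually_ge_atTop 2] with t ht using upper ht
  apply le_antisymm
  · refine limsup_le_of_le ?_ hub
    exact IsCoboundedUnder.of_frequently_ge (freq (sub_one_lt _))
  · refine le_of_forall_lt_imp_le_of_dense fun a ha => ?_
    exact le_limsup_of_frequently_le (freq ha) ⟨_, hub⟩
end

section
/- Let f0 = sup_{k≥0} 2^{k−2^k} χ_{[0,2^{2^k})} and a(t,f0) = (1/log(1+t)) ∫_0^t f0(s) ds. Then limsup_{t→∞} (M a(·,f0))(t) = 4/(e·log 2), where (Mg)(t) = (1/log t) ∫_1^t g(s) ds/s for t > 1. -/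
open MeasureTheory Filter Set

/-- `a(t, f0) = (1/log(1+t)) ∫_0^t f0(s) ds`. -/
noncomputable def aF : ℝ → ℝ := fun t => (∫ s in (0:ℝ)..t, f0 s) / Real.log (1 + t)

namespace Aux

noncomputable def T (k : ℕ) : ℝ := (2:ℝ) ^ (2 ^ k)

noncomputable def e (k : ℕ) : ℝ := (2:ℝ) ^ ((k : ℤ) - 2 ^ k)

noncomputable def F (t : ℝ) : ℝ := ∫ s in (0:ℝ)..t, f0 s

noncomputable def H (t : ℝ) : ℝ := ∫ s in (1:ℝ)..t, aF s / s

lemma T_pos (k : ℕ) : 0 < T k := by unfold T; positivity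
lemma e_pos (k : ℕ) : 0 < e k := by unfold e; positivity

lemma T_mono : Monotone T := by
  intro a b h
  unfold T
  exact pow_le_pow_right₀ (by norm_num) (Nat.pow_le_pow_right (by norm_num) h)

lemma T_two (k : ℕ) : 2 ≤ T k := by
  have := T_mono (Nat.zero_le k)
  simpa [T] using this

lemma T_ge (k : ℕ) : (2:ℝ)^k ≤ T k := by
  unfold T
  exact pow_le_pow_right₀ (by norm_num) (Nat.lt_two_pow_self).le

lemma log_T (k : ℕ) : Real.log (T k) = 2 ^ k * Real.log 2 := by
  unfold T; rw [Real.log_pow]; push_cast; ring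

lemma e_anti : Antitone e := by
  apply antitone_nat_of_succ_le
  intro n
  unfold e
  apply zpow_le_zpow_right₀ (by norm_num)
  have : (1:ℤ) ≤ 2 ^ n := one_le_pow₀ (by norm_num)
  push_cast
  rw [pow_succ]
  linarith

lemma e_mul_T (k : ℕ) : e k * T k = 2 ^ k := by
  unfold e T
  rw [← zpow_natCast, ← zpow_natCast, ← zpow_add₀ (by norm_num)]
  congr 1
  push_cast
  ring

lemma e_succ_mul_T (k : ℕ) : e (k+1) * T k ≤ 1 := by
  unfold e T
  rw [← zpow_natCast, ← zpow_add₀ (by norm_num)]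
  apply zpow_le_one_of_nonpos₀ (by norm_num)
  have : (k+1 : ℤ) ≤ 2 ^ k := by
    have := @Nat.lt_two_pow_self k
    exact_mod_cast this
  push_cast
  rw [pow_succ]
  linarith

lemma f0_eq (t : ℝ) : f0 t = ⨆ k : ℕ, if t < T k then e k else 0 := rfl

lemma bdd (t : ℝ) : BddAbove (range fun k : ℕ => if t < T k then e k else 0) := by
  refine ⟨e 0, ?_⟩
  rintro _ ⟨k, rfl⟩
  dsimp only
  split_ifs
  · exact e_anti (Nat.zero_le k)
  · exact (e_pos 0).le

lemma f0_anti : Antitone f0 := by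
  intro a b h
  rw [f0_eq, f0_eq]
  apply ciSup_mono (bdd a)
  intro k
  split_ifs with h1 h2
  · exact le_rfl
  · exact absurd (h.trans_lt h1) h2
  · exact (e_pos k).le
  · exact le_rfl

lemma f0_zero {t : ℝ} (h : t < 2) : f0 t = 1/2 := by
  have he : e 0 = 1/2 := by norm_num [e]
  have hT : T 0 = 2 := by norm_num [T]
  rw [f0_eq, ← he]
  apply le_antisymm
  · apply ciSup_le
    intro k
    split_ifs
    · exact e_anti (Nat.zero_le k)
    · exact (e_pos 0).le
  · have := le_ciSup (bdd t) 0
    simpa [hT, h] using this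

lemma f0_block {t : ℝ} {k : ℕ} (h1 : T k ≤ t) (h2 : t < T (k+1)) : f0 t = e (k+1) := by
  rw [f0_eq]
  apply le_antisymm
  · apply ciSup_le
    intro j
    split_ifs with hj
    · apply e_anti
      by_contra hlt
      have : j ≤ k := by omega
      exact absurd (T_mono this) (by linarith)
    · exact (e_pos _).le
  · have := le_ciSup (bdd t) (k+1)
    simpa [h2] using this

lemma f0_int (a b : ℝ) : IntervalIntegrable f0 volume a b := f0_anti.intervalIntegrable

lemma F_cont : Continuous F := intervalIntegral.continuous_primitive f0_int 0

lemma int_const {a b c : ℝ} (hab : a ≤ b) (h : ∀ s, a ≤ s → s < b → f0 s = c) :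
    ∫ s in a..b, f0 s = c * (b - a) := by
  have : ∫ s in a..b, f0 s = ∫ s in a..b, c := by
    rw [intervalIntegral.integral_of_le hab, intervalIntegral.integral_of_le hab,
      integral_Ioc_eq_integral_Ioo, integral_Ioc_eq_integral_Ioo]
    apply setIntegral_congr_fun measurableSet_Ioo
    intro s hs
    exact h s hs.1.le hs.2
  rw [this, intervalIntegral.integral_const, smul_eq_mul, mul_comm]

lemma F_block {t : ℝ} {k : ℕ} (h1 : T k ≤ t) (h2 : t ≤ T (k+1)) :
    F t = F (T k) + e (k+1) * (t - T k) := by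
  unfold F
  rw [← int_const h1 (fun s hs hs' => f0_block hs (hs'.trans_le h2)),
    intervalIntegral.integral_add_adjacent_intervals (f0_int _ _) (f0_int _ _)]

lemma F_small {t : ℝ} (h : 0 ≤ t) (h2 : t ≤ 2) : F t = 1/2 * t := by
  unfold F
  rw [int_const h (fun s _ hs => f0_zero (hs.trans_le h2))]; ring

lemma F_T_bounds (k : ℕ) : (2:ℝ)^(k+1) - (k+1) ≤ F (T k) ∧ F (T k) ≤ 2^(k+1) := by
  induction k with
  | zero =>
    have hT : T 0 = 2 := by norm_num [T]
    rw [hT, F_small (by norm_num) le_rfl]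
    norm_num
  | succ k ih =>
    have h := F_block (T_mono (Nat.le_succ k)) (le_refl (T (k+1)))
    have h1 := e_mul_T (k+1)
    have h2 := e_succ_mul_T k
    have h3 := mul_pos (e_pos (k+1)) (T_pos k)
    simp only [Nat.succ_eq_add_one] at h
    rw [h, mul_sub, h1]
    have : (2:ℝ)^(k+1+1) = 2 * 2^(k+1) := by ring
    rw [this]
    push_cast
    constructor <;> linarith [ih.1, ih.2]

lemma g_cont : ContinuousOn (fun s => aF s / s) (Ici 1) := by
  have : (fun s => aF s / s) = fun s => F s / Real.log (1 + s) / s := rfl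
  rw [this]
  apply ContinuousOn.div
  · apply ContinuousOn.div F_cont.continuousOn
    · apply ContinuousOn.log (by fun_prop)
      intro x hx
      have : (1:ℝ) ≤ x := hx
      linarith
    · intro x hx
      have : (1:ℝ) ≤ x := hx
      exact (Real.log_pos (by linarith)).ne'
  · fun_prop
  · intro x hx
    have : (1:ℝ) ≤ x := hx
    linarith

lemma g_int {a b : ℝ} (ha : 1 ≤ a) (hb : 1 ≤ b) :
    IntervalIntegrable (fun s => aF s / s) volume a b := by
  apply (g_cont.mono _).intervalIntegrable
  intro x hx
  exact (le_min ha hb).trans hx.1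

lemma H_split {a b : ℝ} (ha : 1 ≤ a) (hb : 1 ≤ b) :
    H b = H a + ∫ s in a..b, aF s / s := by
  unfold H
  rw [intervalIntegral.integral_add_adjacent_intervals (g_int le_rfl ha) (g_int ha hb)]

lemma loglog_deriv {s : ℝ} (hs : 1 < s) :
    HasDerivAt (fun x => Real.log (Real.log x)) (1 / (s * Real.log s)) s := by
  have h := ((Real.hasDerivAt_log (by linarith : s ≠ 0)).log (Real.log_pos hs).ne')
  convert h using 1
  have := (Real.log_pos hs).ne'
  field_simp

lemma upper_step {t : ℝ} {k : ℕ} (h1 : T k ≤ t) (h2 : t ≤ T (k+1)) :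
    H t ≤ H (T k) + 2^(k+1) * (Real.log (Real.log t) - Real.log (Real.log (T k))) + 3 := by
  have hT := T_two k
  rw [H_split (a := T k) (by linarith) (by linarith : 1 ≤ t)]
  have hlT : 0 < Real.log (T k) := Real.log_pos (by linarith)
  set c := e (k+1) / Real.log (T k) with hc
  have hder : ∀ s ∈ uIcc (T k) t, HasDerivAt
      (fun x => 2^(k+1) * Real.log (Real.log x) + c * x)
      (2^(k+1) * (1 / (s * Real.log s)) + c * 1) s := by
    intro s hs
    rw [uIcc_of_le h1] at hs
    exact ((loglog_deriv (by linarith [hs.1])).const_mul _).add ((hasDerivAt_id s).const_mul c)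
  have hcont : ContinuousOn (fun s : ℝ => 2^(k+1) * (1 / (s * Real.log s)) + c * 1)
      (uIcc (T k) t) := by
    rw [uIcc_of_le h1]
    have : ∀ s ∈ Icc (T k) t, s ≠ 0 ∧ s * Real.log s ≠ 0 := by
      intro s hs
      have h0 : 0 < Real.log s := Real.log_pos (by linarith [hs.1])
      have h3 : 0 < s := by linarith [hs.1]
      exact ⟨h3.ne', by positivity⟩
    refine ContinuousOn.add (ContinuousOn.mul continuousOn_const
      (ContinuousOn.div continuousOn_const (ContinuousOn.mul continuousOn_id
        (ContinuousOn.log continuousOn_id fun s hs => (this s hs).1)) fun s hs => (this s hs).2))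
      continuousOn_const
  have hI := intervalIntegral.integral_eq_sub_of_hasDerivAt hder hcont.intervalIntegrable
  have hle : ∫ s in (T k)..t, aF s / s ≤
      ∫ s in (T k)..t, (2^(k+1) * (1 / (s * Real.log s)) + c * 1) := by
    apply intervalIntegral.integral_mono_on h1 (g_int (by linarith) (by linarith))
      hcont.intervalIntegrable
    intro s hs
    have hs0 : 0 < s := by linarith [hs.1]
    have hls : 0 < Real.log s := Real.log_pos (by linarith [hs.1])
    have hl1 : Real.log s ≤ Real.log (1 + s) := Real.log_le_log hs0 (by linarith)
    have hl2 : Real.log (T k) ≤ Real.log s := Real.log_le_log (T_pos k) hs.1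
    have hF : F s ≤ 2^(k+1) + e (k+1) * s := by
      rw [F_block hs.1 (hs.2.trans h2)]
      have := mul_pos (e_pos (k+1)) (T_pos k)
      have := (F_T_bounds k).2
      linarith
    have hnn : 0 ≤ 2^(k+1) + e (k+1) * s := by have := e_pos (k+1); positivity
    calc aF s / s = F s / Real.log (1 + s) / s := rfl
      _ ≤ (2^(k+1) + e (k+1) * s) / Real.log s / s := by
          gcongr
      _ = 2^(k+1) * (1 / (s * Real.log s)) + e (k+1) / Real.log s := by
          field_simp
      _ ≤ 2^(k+1) * (1 / (s * Real.log s)) + c * 1 := by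
          rw [hc, mul_one]
          have := (e_pos (k+1)).le
          gcongr
  have hct : c * (t - T k) ≤ 3 := by
    have a1 : e (k+1) * (t - T k) ≤ 2^(k+1) := by
      rw [← e_mul_T (k+1)]
      apply mul_le_mul_of_nonneg_left _ (e_pos _).le
      linarith
    rw [hc, div_mul_eq_mul_div, div_le_iff₀ hlT, log_T]
    have := Real.log_two_gt_d9
    have h2k : (0:ℝ) < 2^k := by positivity
    rw [pow_succ] at a1
    nlinarith
  rw [hI] at hle
  linarith

lemma loglog_one_add (k : ℕ) :
    Real.log (Real.log (1 + T k)) ≤ Real.log (Real.log (T k)) + 2 / 2^k := by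
  have hT := T_two k
  have hT0 := T_pos k
  have hl2 := Real.log_two_gt_d9
  have h2k : (1:ℝ) ≤ 2^k := one_le_pow₀ (by norm_num)
  have hlT : 1/2 ≤ Real.log (T k) := by rw [log_T]; nlinarith
  have a1 : Real.log (1 + T k) ≤ Real.log (T k) + 1 / T k := by
    have : 1 + T k = T k * (1 + 1 / T k) := by field_simp; ring
    rw [this, Real.log_mul hT0.ne' (by positivity)]
    have := Real.log_le_sub_one_of_pos (by positivity : 0 < 1 + 1 / T k)
    linarith
  have hpos : 0 < Real.log (1 + T k) := Real.log_pos (by linarith)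
  have hl0 : 0 < Real.log (T k) := by linarith
  have a2 : Real.log (1 + T k) / Real.log (T k) ≤ 1 + 2 / 2^k := by
    rw [div_le_iff₀ hl0]
    have : 1 / T k ≤ 1 / 2^k := one_div_le_one_div_of_le (by positivity) (T_ge k)
    have h3 : 1 / (2:ℝ)^k ≤ 2 / 2^k * Real.log (T k) := by
      rw [div_mul_eq_mul_div]
      gcongr
      linarith
    linarith
  have a3 := Real.log_le_sub_one_of_pos (div_pos hpos hl0)
  rw [Real.log_div hpos.ne' hl0.ne'] at a3
  linarith

lemma lower_step {t : ℝ} {k : ℕ} (h1 : T k ≤ t) (h2 : t ≤ T (k+1)) :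
    H (T k) + 2^(k+1) * (Real.log (Real.log t) - Real.log (Real.log (T k))) - (k + 5) ≤ H t := by
  have hT := T_two k
  rw [H_split (a := T k) (by linarith) (by linarith : 1 ≤ t)]
  have hlT : 0 < Real.log (T k) := Real.log_pos (by linarith)
  obtain ⟨hF1, hF2⟩ := F_T_bounds k
  have hF0 : 0 ≤ F (T k) := by
    have : ((k:ℝ)+1) ≤ 2^(k+1) := by
      have := @Nat.lt_two_pow_self (k+1)
      exact_mod_cast this.le
    linarith
  set c := F (T k) with hc
  have hder : ∀ s ∈ uIcc (T k) t, HasDerivAt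
      (fun x => c * Real.log (Real.log (1 + x)))
      (c * (1 / ((1 + s) * Real.log (1 + s)))) s := by
    intro s hs
    rw [uIcc_of_le h1] at hs
    have := (loglog_deriv (s := 1 + s) (by linarith [hs.1]))
    exact (HasDerivAt.comp_const_add 1 s this).const_mul c
  have hcont : ContinuousOn (fun s : ℝ => c * (1 / ((1 + s) * Real.log (1 + s))))
      (uIcc (T k) t) := by
    rw [uIcc_of_le h1]
    have : ∀ s ∈ Icc (T k) t, 1 + s ≠ 0 ∧ (1 + s) * Real.log (1 + s) ≠ 0 := by
      intro s hs
      have h0 : 0 < Real.log (1 + s) := Real.log_pos (by linarith [hs.1])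
      have h3 : 0 < 1 + s := by linarith [hs.1]
      exact ⟨h3.ne', by positivity⟩
    refine (ContinuousOn.mul continuousOn_const
      (ContinuousOn.div continuousOn_const (ContinuousOn.mul (by fun_prop)
        (ContinuousOn.log (by fun_prop) fun s hs => (this s hs).1)) fun s hs => (this s hs).2))
  have hI := intervalIntegral.integral_eq_sub_of_hasDerivAt hder hcont.intervalIntegrable
  have hle : ∫ s in (T k)..t, (c * (1 / ((1 + s) * Real.log (1 + s)))) ≤
      ∫ s in (T k)..t, aF s / s := by
    apply intervalIntegral.integral_mono_on h1 hcont.intervalIntegrable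
      (g_int (by linarith) (by linarith))
    intro s hs
    have hs0 : 0 < s := by linarith [hs.1]
    have hls : 0 < Real.log (1 + s) := Real.log_pos (by linarith [hs.1])
    have hF : c ≤ F s := by
      rw [F_block hs.1 (hs.2.trans h2)]
      have := mul_nonneg (e_pos (k+1)).le (sub_nonneg.2 hs.1)
      linarith
    calc c * (1 / ((1 + s) * Real.log (1 + s))) = c / Real.log (1 + s) / (1 + s) := by
          field_simp
      _ ≤ F s / Real.log (1 + s) / s := by
          have : 0 ≤ F s := hF0.trans hF
          gcongr
          linarith
      _ = aF s / s := rfl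
  rw [hI] at hle
  have b1 := loglog_one_add k
  have hlt : Real.log (T k) ≤ Real.log t := Real.log_le_log (T_pos k) h1
  have hlt0 : 0 < Real.log t := hlT.trans_le hlt
  have b2 : Real.log (Real.log t) ≤ Real.log (Real.log (1 + t)) := by
    apply Real.log_le_log hlt0
    apply Real.log_le_log (by linarith) (by linarith)
  have b3 : Real.log (Real.log t) ≤ Real.log (Real.log (T k)) + 1 := by
    have : Real.log t ≤ 2 * Real.log (T k) := by
      have := Real.log_le_log (by linarith) h2
      rw [log_T] at this ⊢
      rw [pow_succ] at this
      linarith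
    have h3 := Real.log_le_log hlt0 this
    rw [Real.log_mul (by norm_num) hlT.ne'] at h3
    have := Real.log_two_lt_d9
    linarith
  have b4 : Real.log (Real.log (T k)) ≤ Real.log (Real.log t) := Real.log_le_log hlT hlt
  have b5 : c * (2 / 2^k) ≤ 4 := by
    calc c * (2 / 2^k) ≤ 2^(k+1) * (2 / 2^k) := by gcongr
      _ = 4 := by rw [pow_succ]; field_simp; norm_num
  have b6 : c * (Real.log (Real.log t) - Real.log (Real.log (T k)) - 2/2^k) ≤
     c * (Real.log (Real.log (1+t)) - Real.log (Real.log (1 + T k))) := by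
    apply mul_le_mul_of_nonneg_left _ hF0
    linarith
  have b7 : (2^(k+1) - (k+1)) * (Real.log (Real.log t) - Real.log (Real.log (T k))) ≤
      c * (Real.log (Real.log t) - Real.log (Real.log (T k))) :=
    mul_le_mul_of_nonneg_right hF1 (by linarith)
  have b8 : ((k:ℝ)+1) * (Real.log (Real.log t) - Real.log (Real.log (T k))) ≤ (k+1) * 1 :=
    mul_le_mul_of_nonneg_left (by linarith) (by positivity)
  linarith

lemma loglog_T (k : ℕ) : Real.log (Real.log (T (k+1))) - Real.log (Real.log (T k)) =
    Real.log 2 := by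
  have : 0 < Real.log (T k) := Real.log_pos (by linarith [T_two k])
  have h : Real.log (T (k+1)) = 2 * Real.log (T k) := by rw [log_T, log_T]; ring
  rw [h, Real.log_mul (by norm_num) this.ne']
  ring

lemma H_T_upper (k : ℕ) : H (T k) ≤ 2^(k+1) * Real.log 2 + 3 * k + H 2 := by
  induction k with
  | zero =>
    have hT : T 0 = 2 := by norm_num [T]
    have := Real.log_two_gt_d9
    rw [hT]; norm_num; linarith
  | succ k ih =>
    have h := upper_step (T_mono (Nat.le_succ k)) (le_refl (T (k+1)))
    simp only [Nat.succ_eq_add_one] at h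
    rw [loglog_T] at h
    rw [pow_succ (2:ℝ) (k+1)]
    push_cast
    linarith

lemma H_T_lower (k : ℕ) : (2^(k+1) - 2) * Real.log 2 - k * (k+5) + H 2 ≤ H (T k) := by
  induction k with
  | zero =>
    have hT : T 0 = 2 := by norm_num [T]
    rw [hT]; norm_num
  | succ k ih =>
    have h := lower_step (T_mono (Nat.le_succ k)) (le_refl (T (k+1)))
    simp only [Nat.succ_eq_add_one] at h
    rw [loglog_T] at h
    rw [pow_succ (2:ℝ) (k+1)]
    push_cast
    nlinarith

lemma Mop_upper {t : ℝ} {k : ℕ} (h1 : T k ≤ t) (h2 : t ≤ T (k+1)) :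
    Mop aF t ≤ 4 / (Real.exp 1 * Real.log 2) + 2 * (3 * k + 3 + |H 2|) / 2^k := by
  have hT := T_two k
  have hl2 := Real.log_two_gt_d9
  have hL0 : 0 < Real.log 2 := by linarith
  have hlT : 0 < Real.log (T k) := Real.log_pos (by linarith)
  have hlt : Real.log (T k) ≤ Real.log t := Real.log_le_log (T_pos k) h1
  have hlt0 : 0 < Real.log t := hlT.trans_le hlt
  have hk : (0:ℝ) < 2^k := by positivity
  have a1 := upper_step h1 h2
  have a2 := H_T_upper k
  have a3 : Real.log 2 + (Real.log (Real.log t) - Real.log (Real.log (T k))) ≤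
      2 * Real.log t / Real.log (T k) / Real.exp 1 := by
    have p : 0 < 2 * Real.log t / Real.log (T k) / Real.exp 1 := by
      have := Real.exp_pos 1; positivity
    have := Real.log_le_sub_one_of_pos p
    rw [Real.log_div (by positivity) (Real.exp_pos 1).ne', Real.log_div (by positivity) hlT.ne',
      Real.log_mul (by norm_num) hlt0.ne', Real.log_exp] at this
    linarith
  have a4 : H t ≤ 2^(k+1) * (2 * Real.log t / Real.log (T k) / Real.exp 1)
      + (3 * k + 3 + |H 2|) := by
    have := mul_le_mul_of_nonneg_left a3 (by positivity : (0:ℝ) ≤ 2^(k+1))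
    have := le_abs_self (H 2)
    linarith
  have a5 : (2:ℝ)^(k+1) * (2 * Real.log t / Real.log (T k) / Real.exp 1) =
      4 / (Real.exp 1 * Real.log 2) * Real.log t := by
    rw [log_T, pow_succ]
    have := Real.exp_pos 1
    field_simp
    norm_num
  have a6 : (3 * k + 3 + |H 2|) ≤ 2 * (3 * k + 3 + |H 2|) / 2^k * Real.log t := by
    have : 2^k * (1/2) ≤ Real.log t := by
      rw [log_T] at hlt; nlinarith
    rw [div_mul_eq_mul_div, le_div_iff₀ hk]
    have q : 0 ≤ (3 * k + 3 + |H 2|) := by positivity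
    nlinarith
  change H t / Real.log t ≤ _
  rw [div_le_iff₀ hlt0]
  linarith

lemma Mop_lower (k : ℕ) : ∃ t, T k ≤ t ∧ 
    4 / (Real.exp 1 * Real.log 2) - 2 * (2 + k * (k + 5) + (k+5) + |H 2|) / 2^k ≤ Mop aF t := by
  have he1 := Real.exp_one_gt_d9
  have he2 := Real.exp_one_lt_d9
  have hT := T_two k
  have hl2 := Real.log_two_gt_d9
  have hl3 := Real.log_two_lt_d9
  have hL0 : 0 < Real.log 2 := by linarith
  have hlT : 0 < Real.log (T k) := Real.log_pos (by linarith)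
  have hk : (0:ℝ) < 2^k := by positivity
  set t := Real.exp (Real.log (T k) * (Real.exp 1 / 2)) with ht
  have hlt : Real.log t = Real.log (T k) * (Real.exp 1 / 2) := Real.log_exp _
  have h1 : T k ≤ t := by
    rw [← Real.exp_log (T_pos k), ht]
    apply Real.exp_le_exp.2
    nlinarith
  have h2 : t ≤ T (k+1) := by
    rw [← Real.exp_log (T_pos (k+1)), ht]
    apply Real.exp_le_exp.2
    rw [log_T (k+1), log_T k, pow_succ]
    have : 0 < 2^k * Real.log 2 := by positivity
    nlinarith
  refine ⟨t, h1, ?_⟩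
  have hlt0 : 0 < Real.log t := by rw [hlt]; positivity
  have a1 := lower_step h1 h2
  have a2 := H_T_lower k
  have a3 : Real.log 2 + (Real.log (Real.log t) - Real.log (Real.log (T k))) = 1 := by
    rw [hlt, Real.log_mul hlT.ne' (by positivity), Real.log_div (by positivity) (by norm_num),
      Real.log_exp]
    ring
  have a4 : (2:ℝ)^(k+1) - (2 + k * (k + 5) + (k+5) + |H 2|) ≤ H t := by
    have e1 : (2:ℝ)^(k+1) * (Real.log 2 + (Real.log (Real.log t) - Real.log (Real.log (T k)))) =
      2^(k+1) := by rw [a3, mul_one]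
    have := neg_abs_le (H 2)
    linarith
  have a5 : (2:ℝ)^(k+1) = 4 / (Real.exp 1 * Real.log 2) * Real.log t := by
    rw [hlt, log_T, pow_succ]
    have := Real.exp_pos 1
    field_simp
    norm_num
  have a6 : (2 + k * (k + 5) + (k+5) + |H 2|) ≤
      2 * (2 + k * (k + 5) + (k+5) + |H 2|) / 2^k * Real.log t := by
    have : 2^k * (1/2) ≤ Real.log t := by
      rw [hlt, log_T]; nlinarith [mul_pos hk hL0]
    rw [div_mul_eq_mul_div, le_div_iff₀ hk]
    have q : 0 ≤ (2 + k * (k + 5) + (k+5) + |H 2|) := by positivity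
    nlinarith
  change _ ≤ H t / Real.log t
  rw [le_div_iff₀ hlt0]
  linarith

lemma tend (a b c : ℝ) : Tendsto (fun k : ℕ => 2 * (a * k^2 + b * k + c) / (2:ℝ)^k) atTop (nhds 0) := by
  have h0 := tendsto_pow_const_div_const_pow_of_one_lt 0 (by norm_num : (1:ℝ) < 2)
  have h1 := tendsto_pow_const_div_const_pow_of_one_lt 1 (by norm_num : (1:ℝ) < 2)
  have h2 := tendsto_pow_const_div_const_pow_of_one_lt 2 (by norm_num : (1:ℝ) < 2)
  have := ((h2.const_mul (2*a)).add (h1.const_mul (2*b))).add (h0.const_mul (2*c))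
  simp only [mul_zero, add_zero] at this
  refine this.congr ?_
  intro k
  ring

lemma ev_upper {ε : ℝ} (hε : 0 < ε) :
    ∀ᶠ t in atTop, Mop aF t ≤ 4 / (Real.exp 1 * Real.log 2) + ε := by
  have h := (tend 0 3 (3 + |H 2|)).eventually (gt_mem_nhds hε)
  obtain ⟨K, hK⟩ := eventually_atTop.1 h
  filter_upwards [eventually_ge_atTop (T K)] with t ht
  have hL0 : 0 < Real.log 2 := Real.log_pos (by norm_num)
  have ht2 : 2 ≤ t := (T_two K).trans ht
  have ht0 : 0 < t := by linarith
  obtain ⟨k, hk1, hk2⟩ := exists_nat_pow_near (x := Real.log t / Real.log 2) (y := 2)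
    (by rw [one_le_div hL0]; exact Real.log_le_log (by norm_num) ht2) (by norm_num)
  rw [le_div_iff₀ hL0, ← log_T] at hk1
  rw [div_lt_iff₀ hL0, ← log_T] at hk2
  have h1 : T k ≤ t := (Real.log_le_log_iff (T_pos k) ht0).1 hk1
  have h2 : t < T (k+1) := (Real.log_lt_log_iff ht0 (T_pos _)).1 hk2
  have hKk : K ≤ k := by
    by_contra hlt
    have : k + 1 ≤ K := by omega
    linarith [T_mono this]
  have := Mop_upper h1 h2.le
  have h3 := hK k hKk
  have h4 : 2 * (0 * (k:ℝ)^2 + 3 * k + (3 + |H 2|)) / (2:ℝ)^k = 2 * (3 * k + 3 + |H 2|) / 2^k := by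
    ring
  linarith

lemma fr_lower {ε : ℝ} (hε : 0 < ε) :
    ∃ᶠ t in atTop, 4 / (Real.exp 1 * Real.log 2) - ε ≤ Mop aF t := by
  rw [frequently_atTop]
  intro a
  have h := (tend 1 6 (7 + |H 2|)).eventually (gt_mem_nhds hε)
  have h' := (tendsto_pow_atTop_atTop_of_one_lt (by norm_num : (1:ℝ) < 2)).eventually_ge_atTop a
  obtain ⟨k, hk1, hk2⟩ := (h.and h').exists
  obtain ⟨t, ht1, ht2⟩ := Mop_lower k
  refine ⟨t, hk2.trans ((T_ge k).trans ht1), ?_⟩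
  have h4 : 2 * (1 * (k:ℝ)^2 + 6 * k + (7 + |H 2|)) / (2:ℝ)^k =
      2 * (2 + k * (k + 5) + (k+5) + |H 2|) / 2^k := by
    ring
  linarith

end Aux

/-- `limsup_{t→∞} (M a(·,f0))(t) = 4/(e log 2)`. -/
theorem limsup_Mop_avA_f0 :
    Filter.limsup (Mop aF) Filter.atTop = 4 / (Real.exp 1 * Real.log 2) := by
  apply le_antisymm
  · apply le_of_forall_pos_le_add
    intro ε hε
    exact limsup_le_of_le (IsCoboundedUnder.of_frequently_ge (Aux.fr_lower one_pos))
      (Aux.ev_upper hε)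
  · apply le_of_forall_sub_le
    intro ε hε
    exact le_limsup_of_frequently_le (Aux.fr_lower hε)
      (isBoundedUnder_of_eventually_le (Aux.ev_upper one_pos))
end

section
/- Let ψ : [0,∞) → [0,∞) be a concave function with lim_{t→0+} ψ(t) = 0 and lim_{t→∞} ψ(t) = ∞, satisfying lim_{t→∞} ψ(2t)/ψ(t) = 1. Then for every nonnegative nonincreasing measurable function f on (0,∞) with sup_{t>0} (1/ψ(t)) ∫_0^t f(s) ds < ∞, one has lim_{t→∞} (1/log t) ∫_1^t (f(s)/ψ(s)) ds = 0. -/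
open MeasureTheory Filter Set

lemma aux_mono (ψ : ℝ → ℝ) (hψ : InOmegaClass ψ) : MonotoneOn ψ (Set.Ici 0) := by
  obtain ⟨hc, -, -, ht⟩ := hψ
  intro a ha b hb hab
  by_contra! hlt
  obtain ⟨c, hc1, hc2⟩ := ((ht.eventually_gt_atTop (ψ b)).and (eventually_ge_atTop b)).exists
  have hcm : c ∈ Set.Ici (0:ℝ) := le_trans hb hc2
  have hmin := hc.ge_on_segment ha hcm (z := b) (by
    rw [segment_eq_Icc (hab.trans hc2)]; exact ⟨hab, hc2⟩)
  exact absurd hmin (not_le.2 (lt_min hlt hc1))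

lemma aux_pos (ψ : ℝ → ℝ) (hψ : InOmegaClass ψ) : ∀ t, 1 ≤ t → 0 < ψ t := by
  have hm := aux_mono ψ hψ
  obtain ⟨hc, hn, -, ht⟩ := hψ
  have h1 : 0 < ψ 1 := by
    obtain ⟨c, hc1, hc2⟩ := ((ht.eventually_gt_atTop 0).and (eventually_ge_atTop 1)).exists
    have hcpos : (0:ℝ) < c := by linarith
    have hi := inv_le_one_of_one_le₀ hc2
    have h2 := hc.2
    have h := h2 (show c ∈ Set.Ici (0:ℝ) from hcpos.le) (show (0:ℝ) ∈ Set.Ici (0:ℝ) by simp)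
      (show 0 ≤ c⁻¹ by positivity) (show 0 ≤ 1 - c⁻¹ by linarith) (by ring)
    simp only [smul_eq_mul, mul_zero, add_zero] at h
    rw [inv_mul_cancel₀ hcpos.ne'] at h
    have h2 : 0 < c⁻¹ * ψ c := by positivity
    have h3 : 0 ≤ (1 - c⁻¹) * ψ 0 := mul_nonneg (by
        have := inv_le_one_of_one_le₀ hc2
        linarith) (hn 0 le_rfl)
    linarith
  intro t h
  exact h1.trans_le (hm (by simp) (show (0:ℝ) ≤ t by linarith) h)

theorem cesaro_mean_tf_over_psi_tendsto_zero (ψ : ℝ → ℝ) (hψ : InOmegaClass ψ)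
    (hlim : Filter.Tendsto (fun t => ψ (2 * t) / ψ t) Filter.atTop (nhds 1))
    (f : ℝ → ℝ) (hfmeas : Measurable f)
    (hfpos : ∀ t > (0:ℝ), 0 ≤ f t) (hfmono : AntitoneOn f (Set.Ioi 0))
    (hfint : ∀ t > (0:ℝ), IntegrableOn f (Set.Ioc 0 t))
    (hfbdd : ∃ C : ℝ, ∀ t > (0:ℝ), avA ψ f t ≤ C) :
    Filter.Tendsto (fun t => (∫ s in (1:ℝ)..t, f s / ψ s) / Real.log t)
      Filter.atTop (nhds 0) := by
  obtain ⟨C, hC⟩ := hfbdd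
  have hm := aux_mono ψ hψ
  have hp := aux_pos ψ hψ
  have hI0 : ∀ t > (0:ℝ), IntervalIntegrable f volume 0 t := fun t ht =>
    (intervalIntegrable_iff_integrableOn_Ioc_of_le ht.le).2 (hfint t ht)
  have hA0 : ∀ t, 1 ≤ t → 0 ≤ avA ψ f t := by
    intro t ht
    refine div_nonneg ?_ (hp t ht).le
    rw [intervalIntegral.integral_of_le (by linarith)]
    exact setIntegral_nonneg measurableSet_Ioc (fun x hx => hfpos x hx.1)
  have hC0 : 0 ≤ C := (hA0 1 le_rfl).trans (hC 1 one_pos)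
  have hanti : AntitoneOn (fun s => f s / ψ s) (Set.Ici 1) := by
    intro a ha b hb hab
    have ha' : (1:ℝ) ≤ a := ha
    have hb' : (1:ℝ) ≤ b := hb
    exact div_le_div₀ (hfpos a (by linarith))
      (hfmono (show (0:ℝ) < a by linarith) (show (0:ℝ) < b by linarith) hab) (hp a ha)
      (hm (show (0:ℝ) ≤ a by linarith) (show (0:ℝ) ≤ b by linarith) hab)
  have hI : ∀ a b : ℝ, 1 ≤ a → a ≤ b → IntervalIntegrable (fun s => f s / ψ s) volume a b := by
    intro a b ha hab
    refine AntitoneOn.intervalIntegrable (hanti.mono ?_)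
    rw [uIcc_of_le hab]
    exact fun x hx => ha.trans hx.1
  have hnn : ∀ a b : ℝ, 1 ≤ a → a ≤ b → 0 ≤ ∫ s in a..b, f s / ψ s := by
    intro a b ha hab
    refine intervalIntegral.integral_nonneg hab fun x hx => ?_
    have : 1 ≤ x := ha.trans hx.1
    exact div_nonneg (hfpos x (by linarith)) (hp x this).le
  have hstep : ∀ a : ℝ, 1 ≤ a → ∫ s in a..(2*a), f s / ψ s
      ≤ avA ψ f (2*a) - avA ψ f a + C * |ψ (2*a) / ψ a - 1| := by
    intro a ha
    have h2 : 1 ≤ 2 * a := by linarith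
    have hpa := hp a ha
    have hp2 := hp _ h2
    have hfi : IntervalIntegrable f volume a (2*a) :=
      (hI0 a (by linarith)).symm.trans (hI0 (2*a) (by linarith))
    have e1 : ∫ s in a..(2*a), f s / ψ s ≤ ∫ s in a..(2*a), f s / ψ a := by
      refine intervalIntegral.integral_mono_on (by linarith) (hI a _ ha (by linarith))
        (hfi.div_const _) fun x hx => ?_
      exact div_le_div_of_nonneg_left (hfpos x (by linarith [hx.1])) hpa
        (hm (show (0:ℝ) ≤ a by linarith) (show (0:ℝ) ≤ x by linarith [hx.1]) hx.1)
    rw [intervalIntegral.integral_div,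
      ← intervalIntegral.integral_interval_sub_left (hI0 (2*a) (by linarith))
        (hI0 a (by linarith))] at e1
    have e2 : ((∫ s in (0:ℝ)..(2*a), f s) - ∫ s in (0:ℝ)..a, f s) / ψ a
        = avA ψ f (2*a) - avA ψ f a + avA ψ f (2*a) * (ψ (2*a) / ψ a - 1) := by
      unfold avA
      field_simp
      ring
    have e3 : avA ψ f (2*a) * (ψ (2*a) / ψ a - 1) ≤ C * |ψ (2*a) / ψ a - 1| :=
      mul_le_mul (hC _ (by linarith)) (le_abs_self _)
        (by
          rw [sub_nonneg, one_le_div hpa]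
          exact hm (show (0:ℝ) ≤ a by linarith) (show (0:ℝ) ≤ 2*a by linarith) (by linarith)) hC0
    linarith
  have h1p : ∀ n : ℕ, (1:ℝ) ≤ 2 ^ n := fun n => one_le_pow₀ (by norm_num)
  have hsum : ∀ n : ℕ, ∫ s in (1:ℝ)..(2^n), f s / ψ s ≤ avA ψ f (2^n) - avA ψ f 1
      + ∑ k ∈ Finset.range n, C * |ψ (2 * 2^k) / ψ (2^k) - 1| := by
    intro n
    induction n with
    | zero => simp
    | succ n ih =>
      have h := hstep (2^n) (h1p n)
      rw [Finset.sum_range_succ, pow_succ' (2:ℝ) n,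
        ← intervalIntegral.integral_add_adjacent_intervals (hI 1 (2^n) le_rfl (h1p n))
          (hI (2^n) (2*2^n) (h1p n) (by linarith [h1p n]))]
      linarith
  have hu : Tendsto (fun k : ℕ => C * |ψ (2 * 2^k) / ψ (2^k) - 1|) atTop (nhds 0) := by
    have h := hlim.comp (tendsto_pow_atTop_atTop_of_one_lt (one_lt_two (α := ℝ)))
    have h' := ((h.sub_const 1).abs).const_mul C
    simpa [Function.comp_def] using h'
  have hB : Tendsto (fun n : ℕ => 3 * ((n:ℝ)⁻¹ * C + (n:ℝ)⁻¹ *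
      ∑ k ∈ Finset.range n, C * |ψ (2 * 2^k) / ψ (2^k) - 1|)) atTop (nhds 0) := by
    have h := (((tendsto_inv_atTop_nhds_zero_nat (𝕜 := ℝ)).mul_const C).add hu.cesaro).const_mul 3
    simpa using h
  have hl2 : 0 < Real.log 2 := Real.log_pos one_lt_two
  have hN : Tendsto (fun t : ℝ => ⌈Real.log t / Real.log 2⌉₊) atTop atTop :=
    tendsto_nat_ceil_atTop.comp (Real.tendsto_log_atTop.atTop_div_const hl2)
  refine squeeze_zero' ?_ ?_ (hB.comp hN)
  · filter_upwards [eventually_ge_atTop 1] with t ht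
    exact div_nonneg (hnn 1 t le_rfl ht) (Real.log_nonneg ht)
  · filter_upwards [eventually_ge_atTop 1, Real.tendsto_log_atTop.eventually_ge_atTop 1]
      with t ht hlog
    simp only [Function.comp]
    set n := ⌈Real.log t / Real.log 2⌉₊ with hn
    have hle : Real.log t / Real.log 2 ≤ n := Nat.le_ceil _
    have hlt : (n:ℝ) < Real.log t / Real.log 2 + 1 :=
      Nat.ceil_lt_add_one (div_nonneg (by linarith) hl2.le)
    have hnpos : (0:ℝ) < n := lt_of_lt_of_le (by positivity) hle
    have htn : t ≤ 2 ^ n := by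
      rw [← Real.log_le_log_iff (by linarith) (by positivity), Real.log_pow]
      exact (div_le_iff₀ hl2).1 hle
    have hn3 : (n:ℝ) ≤ 3 * Real.log t := by
      have : Real.log t / Real.log 2 ≤ 2 * Real.log t := by
        rw [div_le_iff₀ hl2]
        nlinarith [Real.log_two_gt_d9]
      linarith
    set S := ∑ k ∈ Finset.range n, C * |ψ (2 * 2^k) / ψ (2^k) - 1| with hS
    have hS0 : 0 ≤ S := Finset.sum_nonneg fun k _ => mul_nonneg hC0 (abs_nonneg _)
    have hG : ∫ s in (1:ℝ)..t, f s / ψ s ≤ C + S := by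
      have a1 := hsum n
      have a2 := intervalIntegral.integral_add_adjacent_intervals (hI 1 t le_rfl ht)
        (hI t (2^n) ht htn)
      have a3 := hnn t (2^n) ht htn
      have a4 := hA0 1 le_rfl
      have a5 := hC (2^n) (by positivity)
      linarith
    rw [div_le_iff₀ (by linarith)]
    have : 3 * ((n:ℝ)⁻¹ * C + (n:ℝ)⁻¹ * S) * Real.log t = (C + S) * (3 * Real.log t / n) := by
      field_simp
    rw [this]
    have h1 : 1 ≤ 3 * Real.log t / n := (one_le_div hnpos).2 hn3
    nlinarith
end

section
/- Let γ be a generalized limit on the bounded measurable functions on (0,∞), i.e. a linear functional with liminf_{t→∞} x(t) ≤ γ(x) ≤ limsup_{t→∞} x(t) for all bounded measurable x. Define ω(x) := γ(Mx) where (Mx)(t) = (1/log t) ∫_1^t x(s) ds/s for t > e and (Mx)(t) := 0 for t ≤ e. Then ω is a dilation invariant generalized limit: ω is linear, liminf_{t→∞} x(t) ≤ ω(x) ≤ limsup_{t→∞} x(t) for all bounded measurable x, and ω(σ_s x) = ω(x) for all s > 0, where (σ_s x)(t) = x(t/s). -/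
open MeasureTheory Filter Set

/-- The logarithmic Cesàro mean, `(Mx)(t) = (1/log t) ∫_1^t x(s) ds/s` for `t > e`
and `(Mx)(t) = 0` for `t ≤ e`. -/
noncomputable def MopE (x : ℝ → ℝ) : ℝ → ℝ := fun t =>
  if Real.exp 1 < t then (∫ s in (1:ℝ)..t, x s / s) / Real.log t else 0


lemma aux_int {x : ℝ → ℝ} (hm : Measurable x) (hb : BddPos x) {a b : ℝ} (ha : 0 < a)
    (hb0 : 0 < b) : IntervalIntegrable (fun s => x s / s) volume a b := by
  obtain ⟨C, hC⟩ := hb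
  have h0 : ∀ s ∈ uIcc a b, s ≠ 0 := fun s hs => ((lt_min ha hb0).trans_le hs.1).ne'
  have h1 : IntervalIntegrable (fun s : ℝ => C * s⁻¹) volume a b := by
    apply ContinuousOn.intervalIntegrable
    exact continuousOn_const.mul (continuousOn_id.inv₀ h0)
  refine h1.mono_fun' (hm.div measurable_id).aestronglyMeasurable ?_
  refine (ae_restrict_mem measurableSet_uIoc).mono fun s hs => ?_
  have hs0 : 0 < s := (lt_min ha hb0).trans hs.1
  simp only [Real.norm_eq_abs, div_eq_mul_inv, abs_mul, abs_inv, abs_of_pos hs0]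
  exact mul_le_mul_of_nonneg_right (hC s hs0) (inv_nonneg.2 hs0.le)

lemma aux_const (C : ℝ) {a b : ℝ} (ha : 0 < a) (hb : 0 < b) :
    ∫ s in a..b, C / s = C * (Real.log b - Real.log a) := by
  simp only [div_eq_mul_inv]
  rw [intervalIntegral.integral_const_mul, integral_inv_of_pos ha hb,
    Real.log_div hb.ne' ha.ne']

lemma aux_bound {x : ℝ → ℝ} {C : ℝ} (hC : ∀ t > (0:ℝ), |x t| ≤ C) {a b : ℝ} (ha : 0 < a)
    (hb0 : 0 < b) : |∫ s in a..b, x s / s| ≤ C * |Real.log b - Real.log a| := by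
  have hC0 : 0 ≤ C := (abs_nonneg _).trans (hC 1 one_pos)
  have h0 : ∀ s ∈ uIcc a b, s ≠ 0 := fun s hs => ((lt_min ha hb0).trans_le hs.1).ne'
  have h1 : IntervalIntegrable (fun s : ℝ => C / s) volume a b := by
    apply ContinuousOn.intervalIntegrable
    exact continuousOn_const.div continuousOn_id h0
  have := intervalIntegral.norm_integral_le_abs_of_norm_le (f := fun s => x s / s)
    (g := fun s => C / s) (μ := volume) (a := a) (b := b) ?_ h1
  · rwa [aux_const C ha hb0, abs_mul, abs_of_nonneg hC0] at this
  · refine (ae_restrict_mem measurableSet_uIoc).mono fun s hs => ?_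
    have hs0 : 0 < s := (lt_min ha hb0).trans hs.1
    simp only [Real.norm_eq_abs, abs_div, abs_of_pos hs0]
    exact div_le_div_of_nonneg_right (hC s hs0) hs0.le

lemma aux_exp {t : ℝ} (ht : Real.exp 1 < t) : 1 < t ∧ 1 < Real.log t := by
  have h1 : 1 < Real.exp 1 := by simp
  refine ⟨h1.trans ht, ?_⟩
  rwa [Real.lt_log_iff_exp_lt (by linarith)]

lemma aux_Mbdd {x : ℝ → ℝ} (hb : BddPos x) : BddPos (MopE x) := by
  obtain ⟨C, hC⟩ := hb
  have hC0 : 0 ≤ C := (abs_nonneg _).trans (hC 1 one_pos)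
  refine ⟨C, fun t _ => ?_⟩
  unfold MopE
  split_ifs with h
  · obtain ⟨h1, h2⟩ := aux_exp h
    have := aux_bound hC one_pos (zero_lt_one.trans h1)
    rw [Real.log_one, sub_zero] at this
    rwa [abs_div, div_le_iff₀ (by positivity)]
  · simpa using hC0

lemma aux_Mmeas {x : ℝ → ℝ} (hm : Measurable x) (hb : BddPos x) : Measurable (MopE x) := by
  obtain ⟨C, hC⟩ := hb
  have hC0 : 0 ≤ C := (abs_nonneg _).trans (hC 1 one_pos)
  let g : ℝ → ℝ := fun s => if 1 < s then x s / s else 0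
  have hg : Measurable g := Measurable.ite measurableSet_Ioi (hm.div measurable_id)
    measurable_const
  have hgi : ∀ a b, IntervalIntegrable g volume a b := by
    intro a b
    refine (intervalIntegrable_const (c := C)).mono_fun' hg.aestronglyMeasurable ?_
    refine Eventually.of_forall fun s => ?_
    simp only [g]
    split_ifs with h
    · have hs0 : 0 < s := by linarith
      simp only [Real.norm_eq_abs, abs_div, abs_of_pos hs0]
      exact (div_le_self (abs_nonneg _) h.le).trans (hC s hs0)
    · simpa using hC0
  have hcont := intervalIntegral.continuous_primitive hgi 1
  have : MopE x = fun t => if Real.exp 1 < t then (∫ s in (1:ℝ)..t, g s) / Real.log t else 0 := by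
    funext t
    unfold MopE
    split_ifs with h
    · congr 1
      apply intervalIntegral.integral_congr_ae
      refine Eventually.of_forall fun s hs => ?_
      rw [uIoc_of_le (aux_exp h).1.le] at hs
      simp [g, hs.1]
    · rfl
  rw [this]
  exact Measurable.ite measurableSet_Ioi (hcont.measurable.div Real.measurable_log) measurable_const

lemma aux_add {x y : ℝ → ℝ} (hx : Measurable x) (hbx : BddPos x) (hy : Measurable y)
    (hby : BddPos y) : MopE (x + y) = MopE x + MopE y := by
  funext t
  simp only [MopE, Pi.add_apply]
  split_ifs with h
  · have ht := zero_lt_one.trans (aux_exp h).1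
    simp only [add_div]
    rw [intervalIntegral.integral_add (aux_int hx hbx one_pos ht) (aux_int hy hby one_pos ht),
      add_div]
  · simp

lemma aux_smul (c : ℝ) (x : ℝ → ℝ) : MopE (c • x) = c • MopE x := by
  funext t
  simp only [MopE, Pi.smul_apply, smul_eq_mul]
  split_ifs with h
  · simp only [mul_div_assoc]
    rw [intervalIntegral.integral_const_mul, mul_div_assoc]
  · simp

lemma aux_bu {x : ℝ → ℝ} (hb : BddPos x) : IsBoundedUnder (· ≤ ·) atTop x ∧
    IsBoundedUnder (· ≥ ·) atTop x := by
  obtain ⟨C, hC⟩ := hb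
  constructor
  · exact ⟨C, eventually_map.2 ((eventually_gt_atTop 0).mono fun t ht => (abs_le.1 (hC t ht)).2)⟩
  · exact ⟨-C, eventually_map.2 ((eventually_gt_atTop 0).mono fun t ht => (abs_le.1 (hC t ht)).1)⟩

lemma aux_klog (K : ℝ) : Tendsto (fun t => K / Real.log t) atTop (nhds 0) :=
  Real.tendsto_log_atTop.const_div_atTop K

lemma aux_upper {γ : (ℝ → ℝ) → ℝ} (hγ : IsGenLim γ) {x : ℝ → ℝ} (hm : Measurable x)
    (hb : BddPos x) {b : ℝ} (h : ∀ᶠ t in atTop, x t ≤ b) : γ (MopE x) ≤ b := by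
  obtain ⟨T', hT'⟩ := eventually_atTop.1 h
  let T := max T' 1
  have hT1 : 1 ≤ T := le_max_right _ _
  have hT0 : 0 < T := by linarith
  have hT : ∀ t ≥ T, x t ≤ b := fun t ht => hT' t ((le_max_left _ _).trans ht)
  let K := (∫ s in (1:ℝ)..T, x s / s) - b * Real.log T
  have hlim : Tendsto (fun t => b + K / Real.log t) atTop (nhds b) := by
    simpa using (aux_klog K).const_add b
  have hle : ∀ᶠ t in atTop, MopE x t ≤ b + K / Real.log t := by
    filter_upwards [eventually_gt_atTop (Real.exp 1), eventually_ge_atTop T] with t ht htT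
    obtain ⟨h1, h2⟩ := aux_exp ht
    have ht0 : 0 < t := by linarith
    have hl : 0 < Real.log t := by linarith
    simp only [MopE, if_pos ht]
    rw [div_le_iff₀ hl, add_mul, div_mul_cancel₀ _ hl.ne',
      ← intervalIntegral.integral_add_adjacent_intervals (aux_int hm hb one_pos hT0)
        (aux_int hm hb hT0 ht0)]
    have h3 : ∫ s in T..t, x s / s ≤ ∫ s in T..t, b / s := by
      apply intervalIntegral.integral_mono_on htT (aux_int hm hb hT0 ht0)
        (aux_int (x := fun _ => b) measurable_const ⟨|b|, fun _ _ => le_rfl⟩ hT0 ht0)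
      intro s hs
      exact div_le_div_of_nonneg_right (hT s hs.1) (hT0.le.trans hs.1)
    rw [aux_const b hT0 ht0] at h3
    simp only [K]
    linarith
  refine ((hγ.2.2 _ (aux_Mmeas hm hb) (aux_Mbdd hb)).2).trans ?_
  rw [← hlim.limsup_eq]
  exact limsup_le_limsup hle (aux_bu (aux_Mbdd hb)).2.isCoboundedUnder_le
    hlim.isBoundedUnder_le

lemma aux_zero {γ : (ℝ → ℝ) → ℝ} (hγ : IsGenLim γ) {x : ℝ → ℝ} (hm : Measurable x)
    (hb : BddPos x) (h : Tendsto x atTop (nhds 0)) : γ x = 0 := by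
  have := hγ.2.2 x hm hb
  rw [h.liminf_eq, h.limsup_eq] at this
  exact le_antisymm this.2 this.1

lemma bdd_smul (c : ℝ) {x : ℝ → ℝ} (hb : BddPos x) : BddPos (c • x) := by
  obtain ⟨C, hC⟩ := hb
  refine ⟨|c| * C, fun t ht => ?_⟩
  simp only [Pi.smul_apply, smul_eq_mul, abs_mul]
  exact mul_le_mul_of_nonneg_left (hC t ht) (abs_nonneg _)

lemma bdd_add {x y : ℝ → ℝ} (hx : BddPos x) (hy : BddPos y) : BddPos (x + y) := by
  obtain ⟨C, hC⟩ := hx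
  obtain ⟨D, hD⟩ := hy
  exact ⟨C + D, fun t ht => (abs_add_le _ _).trans (add_le_add (hC t ht) (hD t ht))⟩

lemma aux_dil {x : ℝ → ℝ} (hm : Measurable x) (hb : BddPos x) {s : ℝ} (hs : 0 < s) :
    Tendsto (MopE (fun t => x (t / s)) + (-1 : ℝ) • MopE x) atTop (nhds 0) := by
  obtain ⟨C, hC⟩ := id hb
  refine squeeze_zero_norm' ?_ (aux_klog (C * |Real.log s| + C * |Real.log s|))
  filter_upwards [eventually_gt_atTop (Real.exp 1)] with t ht
  obtain ⟨h1, h2⟩ := aux_exp ht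
  have ht0 : 0 < t := by linarith
  have hl : 0 < Real.log t := by linarith
  have hs1 : 0 < 1 / s := by positivity
  have hts : 0 < t / s := by positivity
  have key : ∫ u in (1:ℝ)..t, x (u / s) / u = ∫ v in (1/s)..(t/s), x v / v := by
    have := intervalIntegral.integral_comp_div (a := 1) (b := t) (fun v => x v / v) hs.ne'
    rw [smul_eq_mul] at this
    have h3 : ∫ u in (1:ℝ)..t, x (u / s) / (u / s) = s * ∫ u in (1:ℝ)..t, x (u / s) / u := by
      rw [← intervalIntegral.integral_const_mul]
      congr 1
      funext u
      rw [div_div_eq_mul_div]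
      ring
    rw [h3] at this
    exact mul_left_cancel₀ hs.ne' this
  have e1 := intervalIntegral.integral_add_adjacent_intervals (aux_int hm hb hs1 one_pos)
    (aux_int hm hb one_pos ht0)
  have e2 := intervalIntegral.integral_add_adjacent_intervals (aux_int hm hb hs1 ht0)
    (aux_int hm hb ht0 hts)
  have b1 := aux_bound hC hs1 one_pos
  have b2 := aux_bound hC ht0 hts
  rw [Real.log_div ht0.ne' hs.ne'] at b2
  rw [Real.log_div one_ne_zero hs.ne', Real.log_one] at b1
  have c1 : (0 - (0 - Real.log s)) = Real.log s := by ring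
  have c2 : (Real.log t - Real.log s - Real.log t) = - Real.log s := by ring
  rw [c1] at b1
  rw [c2, abs_neg] at b2
  simp only [Pi.add_apply, Pi.smul_apply, smul_eq_mul, MopE, if_pos ht, Real.norm_eq_abs]
  rw [key, neg_one_mul, ← sub_eq_add_neg, ← sub_div, abs_div, abs_of_pos hl]
  refine div_le_div_of_nonneg_right ?_ hl.le
  rw [← e2, ← e1]
  refine le_trans (le_of_eq ?_) ((abs_add_le _ _).trans (add_le_add b1 b2))
  congr 1
  ring

/-- Connes' construction: if `γ` is a generalized limit on the bounded measurable
functions on `(0,∞)`, then `ω := γ ∘ M` is a dilation invariant generalized limit. -/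
theorem genLim_comp_cesaro_is_dilation_invariant_genLim
    (γ : (ℝ → ℝ) → ℝ) (hγ : IsGenLim γ) :
    IsGenLim (fun x => γ (MopE x)) ∧ DilInv (fun x => γ (MopE x)) := by
  have hsm : ∀ (c : ℝ) (x : ℝ → ℝ), Measurable x → BddPos x →
      γ (MopE (c • x)) = c * γ (MopE x) := fun c x hm hb => by
    rw [aux_smul, hγ.2.1 c _ (aux_Mmeas hm hb) (aux_Mbdd hb)]
  refine ⟨⟨?_, hsm, ?_⟩, ?_⟩
  · intro x y hx hbx hy hby
    simp only
    rw [aux_add hx hbx hy hby, hγ.1 _ _ (aux_Mmeas hx hbx) (aux_Mbdd hbx) (aux_Mmeas hy hby)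
      (aux_Mbdd hby)]
  · intro x hm hb
    obtain ⟨hu, hl⟩ := aux_bu hb
    constructor
    · refine le_of_forall_lt fun b hlt => ?_
      obtain ⟨b', hb1, hb2⟩ := exists_between hlt
      have h1 := eventually_lt_of_lt_liminf hb2 hl
      have h2 := aux_upper hγ (hm.const_smul (-1 : ℝ)) (bdd_smul (-1) hb) (b := -b')
        (h1.mono fun t ht => by simpa using ht.le)
      rw [hsm _ _ hm hb] at h2
      simp only
      linarith
    · refine le_of_forall_gt_imp_ge_of_dense fun b hlt => ?_
      exact aux_upper hγ hm hb ((eventually_lt_of_limsup_lt hlt hu).mono fun t ht => ht.le)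
  · intro s hs x hm hb
    have hm' : Measurable (fun t => x (t / s)) := hm.comp (measurable_id.div_const s)
    have hb' : BddPos (fun t => x (t / s)) := by
      obtain ⟨C, hC⟩ := hb
      exact ⟨C, fun t ht => hC _ (div_pos ht hs)⟩
    have hM := (aux_Mmeas hm hb).const_smul (-1 : ℝ)
    have hB := bdd_smul (-1) (aux_Mbdd hb)
    have h0 := aux_zero hγ ((aux_Mmeas hm' hb').add hM) (bdd_add (aux_Mbdd hb') hB)
      (aux_dil hm hb hs)
    rw [hγ.1 _ _ (aux_Mmeas hm' hb') (aux_Mbdd hb') hM hB,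
      hγ.2.1 _ _ (aux_Mmeas hm hb) (aux_Mbdd hb)] at h0
    simp only
    linarith
end

section
/- Define ψ(t) = 2^{√(log₂(1+t))} − 1 and g0 = sup_{k≥0} 2^{k−k²} χ_{[0,2^{k²})}, i.e. g0(t) = sup { 2^{k−k²} : k ≥ 0, t < 2^{k²} } (and g0(t) = 0 if no such k exists). Then g0 is nonnegative, nonincreasing, and sup_{t>0} (1/ψ(t)) ∫_0^t g0(s) ds < ∞; that is, g0 belongs to the Marcinkiewicz function space M_ψ. -/
open MeasureTheory Filter Set

/-- `ψ(t) = 2^√(log₂(1+t)) - 1`. -/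
noncomputable def psi0 : ℝ → ℝ := fun t => (2:ℝ) ^ Real.sqrt (Real.logb 2 (1 + t)) - 1

/-- `g0 = sup_{k ≥ 0} 2^(k - k²) χ_[0, 2^(k²))`, i.e.
`g0(t) = sup {2^(k - k²) : k ≥ 0, t < 2^(k²)}` (and `0` if no such `k` exists). -/
noncomputable def g0 : ℝ → ℝ := fun t =>
  ⨆ k : ℕ, if t < (2:ℝ) ^ (k ^ 2) then (2:ℝ) ^ ((k : ℤ) - (k : ℤ) ^ 2) else 0

lemma g0_term_le (k : ℕ) : (2:ℝ) ^ ((k : ℤ) - (k : ℤ) ^ 2) ≤ 1 := by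
  apply zpow_le_one_of_nonpos₀ (by norm_num)
  have : (k:ℤ) ≤ (k:ℤ)^2 := by exact_mod_cast Nat.le_self_pow (by norm_num) k
  linarith

lemma g0_bdd (t : ℝ) : BddAbove (Set.range fun k : ℕ =>
    if t < (2:ℝ) ^ (k ^ 2) then (2:ℝ) ^ ((k : ℤ) - (k : ℤ) ^ 2) else 0) := by
  refine ⟨1, ?_⟩
  rintro _ ⟨k, rfl⟩
  dsimp only
  split_ifs
  · exact g0_term_le k
  · norm_num

lemma g0_nonneg (t : ℝ) : 0 ≤ g0 t := by
  apply Real.iSup_nonneg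
  intro k
  split_ifs
  · positivity
  · exact le_rfl

lemma g0_anti : Antitone g0 := by
  intro a b hab
  apply ciSup_mono (g0_bdd a)
  intro k
  by_cases hb : b < (2:ℝ) ^ (k ^ 2)
  · rw [if_pos hb, if_pos (lt_of_le_of_lt hab hb)]
  · rw [if_neg hb]
    split_ifs
    · positivity
    · exact le_rfl

lemma g0_le_one (t : ℝ) : g0 t ≤ 1 := by
  apply ciSup_le
  intro k
  split_ifs
  · exact g0_term_le k
  · norm_num

lemma g0_le (n : ℕ) (t : ℝ) (ht : (2:ℝ) ^ (n ^ 2) ≤ t) :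
    g0 t ≤ (2:ℝ) ^ (-((n : ℤ) ^ 2 + n)) := by
  apply ciSup_le
  intro k
  split_ifs with h
  · apply zpow_le_zpow_right₀ (by norm_num)
    have h1 : n ^ 2 < k ^ 2 := (pow_lt_pow_iff_right₀ (by norm_num : (1:ℝ) < 2)).1 (ht.trans_lt h)
    have h2 : n < k := lt_of_pow_lt_pow_left₀ 2 (by positivity) h1
    have h3 : (n:ℤ) + 1 ≤ k := by exact_mod_cast h2
    have h4 : (0:ℤ) ≤ n := by positivity
    nlinarith
  · positivity

lemma g0_int (a b : ℝ) : IntervalIntegrable g0 volume a b := g0_anti.intervalIntegrable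

lemma g0_int_le (a b c : ℝ) (hab : a ≤ b) (h : ∀ x, a ≤ x → g0 x ≤ c) :
    ∫ s in a..b, g0 s ≤ (b - a) * c := by
  have := intervalIntegral.integral_mono_on (μ := volume) hab (g0_int a b)
    (intervalIntegrable_const (c := c)) (fun x hx => h x hx.1)
  simpa using this

lemma g0_I (n : ℕ) : ∫ s in (0:ℝ)..(2:ℝ) ^ (n ^ 2), g0 s ≤ (2:ℝ) ^ (n + 1) - 1 := by
  induction n with
  | zero =>
    have := g0_int_le 0 1 1 (by norm_num) (fun x _ => g0_le_one x)
    norm_num at this ⊢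
    exact this
  | succ n ih =>
    rw [← intervalIntegral.integral_add_adjacent_intervals (g0_int 0 ((2:ℝ) ^ (n ^ 2))) (g0_int _ _)]
    have h := g0_int_le ((2:ℝ) ^ (n ^ 2)) ((2:ℝ) ^ ((n+1) ^ 2)) _
      (pow_le_pow_right₀ (by norm_num) (by gcongr; omega)) (g0_le n)
    have e : (2:ℝ) ^ ((n+1) ^ 2) * (2:ℝ) ^ (-((n : ℤ) ^ 2 + n)) = 2 ^ (n+1) := by
      rw [← zpow_natCast, ← zpow_natCast, ← zpow_add₀ (by norm_num)]
      congr 1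
      push_cast
      ring
    have p : 0 ≤ (2:ℝ) ^ (n ^ 2) * (2:ℝ) ^ (-((n : ℤ) ^ 2 + n)) := by positivity
    rw [sub_mul, e] at h
    rw [pow_succ (2:ℝ) (n+1)]
    linarith

lemma g0_big (t : ℝ) (ht : 1 ≤ t) :
    ∫ s in (0:ℝ)..t, g0 s ≤ 3 * (2:ℝ) ^ Real.sqrt (Real.logb 2 t) := by
  set s := Real.sqrt (Real.logb 2 t) with hs
  have hs0 : 0 ≤ s := Real.sqrt_nonneg _
  have hss : s ^ 2 = Real.logb 2 t := Real.sq_sqrt (Real.logb_nonneg (by norm_num) ht)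
  have hts : (2:ℝ) ^ (s ^ 2) = t := by
    rw [hss]; exact Real.rpow_logb (by norm_num) (by norm_num) (by linarith)
  set n := ⌊s⌋₊ with hn
  have h1 : (n:ℝ) ≤ s := Nat.floor_le hs0
  have h2 : s < n + 1 := Nat.lt_floor_add_one s
  have hnt : (2:ℝ) ^ (n ^ 2) ≤ t := by
    rw [← hts, ← Real.rpow_natCast]
    apply Real.rpow_le_rpow_of_exponent_le (by norm_num)
    push_cast
    gcongr
  rw [← intervalIntegral.integral_add_adjacent_intervals (g0_int 0 ((2:ℝ) ^ (n ^ 2))) (g0_int _ _)]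
  have h := g0_int_le ((2:ℝ) ^ (n ^ 2)) t _ hnt (g0_le n)
  have p : 0 ≤ (2:ℝ) ^ (n ^ 2) * (2:ℝ) ^ (-((n : ℤ) ^ 2 + n)) := by positivity
  have e : t * (2:ℝ) ^ (-((n : ℤ) ^ 2 + n)) ≤ (2:ℝ) ^ s := by
    rw [← Real.rpow_intCast]
    nth_rewrite 1 [← hts]
    rw [← Real.rpow_add (by norm_num)]
    apply Real.rpow_le_rpow_of_exponent_le (by norm_num)
    push_cast
    have : (0:ℝ) ≤ n := by positivity
    nlinarith
  have q : (2:ℝ) ^ n ≤ (2:ℝ) ^ s := by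
    rw [← Real.rpow_natCast]
    exact Real.rpow_le_rpow_of_exponent_le (by norm_num) h1
  have I := g0_I n
  rw [pow_succ (2:ℝ) n] at I
  rw [sub_mul] at h
  linarith

/-- `g0` is nonnegative, nonincreasing on `(0,∞)`, and belongs to the Marcinkiewicz
function space `M_ψ`: `sup_{t>0} (1/ψ(t)) ∫_0^t g0(s) ds < ∞`. -/
theorem g0_mem_Mpsi :
    (∀ t : ℝ, 0 ≤ g0 t) ∧ AntitoneOn g0 (Set.Ioi 0) ∧
    ∃ C : ℝ, ∀ t > (0:ℝ), (∫ s in (0:ℝ)..t, g0 s) / psi0 t ≤ C := by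
  refine ⟨g0_nonneg, g0_anti.antitoneOn _, 6, ?_⟩
  intro t ht
  rcases le_total t 1 with h | h
  · have h1 := g0_int_le 0 t 1 ht.le (fun x _ => g0_le_one x)
    have h2 : t ≤ psi0 t := by
      have l0 : 0 ≤ Real.logb 2 (1 + t) := Real.logb_nonneg (by norm_num) (by linarith)
      have l1 : Real.logb 2 (1 + t) ≤ 1 := by
        rw [Real.logb_le_iff_le_rpow (by norm_num) (by linarith)]
        norm_num
        linarith
      have l2 : Real.logb 2 (1 + t) ≤ Real.sqrt (Real.logb 2 (1 + t)) := by
        apply Real.le_sqrt_of_sq_le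
        nlinarith
      have l3 := Real.rpow_le_rpow_of_exponent_le (by norm_num : (1:ℝ) ≤ 2) l2
      rw [Real.rpow_logb (by norm_num) (by norm_num) (by linarith)] at l3
      unfold psi0
      linarith
    rw [div_le_iff₀ (by linarith)]
    linarith
  · have h1 := g0_big t h
    have l1 : 1 ≤ Real.logb 2 (1 + t) := by
      rw [Real.le_logb_iff_rpow_le (by norm_num) (by linarith)]
      norm_num
      linarith
    have l2 : 1 ≤ Real.sqrt (Real.logb 2 (1 + t)) := Real.one_le_sqrt.2 l1
    have l3 := Real.rpow_le_rpow_of_exponent_le (by norm_num : (1:ℝ) ≤ 2) l2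
    have l4 : Real.sqrt (Real.logb 2 t) ≤ Real.sqrt (Real.logb 2 (1 + t)) :=
      Real.sqrt_le_sqrt (Real.logb_le_logb_of_le (by norm_num) (by linarith) (by linarith))
    have l5 := Real.rpow_le_rpow_of_exponent_le (by norm_num : (1:ℝ) ≤ 2) l4
    rw [Real.rpow_one] at l3
    have l6 : psi0 t = (2:ℝ) ^ Real.sqrt (Real.logb 2 (1 + t)) - 1 := rfl
    rw [div_le_iff₀ (by linarith)]
    linarith
end
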